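/- Let (V,1,𝒮,Y) be a vertex F-algebra over a formal group law F over a commutative ring R. Then the bracket [a,b] := Res^F_{z=0} Y(a,z)b dz (the coefficient of z^{-1} in (Y(a,z)b)·p_F(z), where p_F(z) = F^{0,1}(z,0)^{-1}) descends to a well-defined R-bilinear bracket on the quotient R-module V̄ = V / Σ_{n≥1} 𝒮^{(n)}(V), and on V̄ it satisfies skew-symmetry [a,b] = −[b,a] and the Jacobi identity [a,[b,c]] − [b,[a,c]] = [[a,b],c]; that is, V̄ becomes a Lie algebra over R. -/

import Mathlib

/-!
Coefficient-wise formal calculus for vertex `F`-algebras, following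
M. Upmeier, "Vertex F-Algebras and Their Associated Lie Algebra".

Series in one, two or three variables are represented by their coefficient
functions `ℤ → R`, `ℤ → ℤ → R`, …; products are given by coefficient-wise
(finite) sums, expressed via `finsum` (`∑ᶠ`).
-/

open scoped BigOperators

noncomputable section

/-- Generalized binomial coefficient `C(n,k) = n(n-1)⋯(n-k+1)/k!` for `n : ℤ`, `k : ℕ`. -/
def zbinom (n : ℤ) (k : ℕ) : ℤ :=
  if 0 ≤ n then (n.toNat.choose k : ℤ)
  else (-1 : ℤ) ^ k * (((k : ℤ) - n - 1).toNat.choose k : ℤ)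

/-- `C(n,m)` for integer `m`, with `C(n,m) = 0` for `m < 0`. -/
def zbinomZ (n m : ℤ) : ℤ := if m < 0 then 0 else zbinom n m.toNat

/-- `(-1)^n` for `n : ℤ`. -/
def msign (n : ℤ) : ℤ := if Even n then 1 else -1

section Series

variable {R : Type*} [CommRing R] {M : Type*} [AddCommGroup M] [Module R M]

/-- Product of a one-variable series with `R`-coefficients with an `M`-valued one. -/
def mulS (f : ℤ → R) (g : ℤ → M) : ℤ → M := fun n => ∑ᶠ i : ℤ, f i • g (n - i)

/-- The constant series `1` (one variable). -/
def oneS (R : Type*) [CommRing R] : ℤ → R := fun n => if n = 0 then 1 else 0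

/-- Natural powers of a one-variable series. -/
def pow1 (f : ℤ → R) : ℕ → ℤ → R
  | 0 => oneS R
  | k + 1 => mulS f (pow1 f k)

/-- Product of two-variable series. -/
def mulS2 (f : ℤ → ℤ → R) (g : ℤ → ℤ → M) : ℤ → ℤ → M :=
  fun a b => ∑ᶠ p : ℤ × ℤ, f p.1 p.2 • g (a - p.1) (b - p.2)

/-- The constant series `1` (two variables). -/
def oneS2 (R : Type*) [CommRing R] : ℤ → ℤ → R := fun a b => if a = 0 ∧ b = 0 then 1 else 0

/-- Natural powers of a two-variable series. -/
def pow2 (f : ℤ → ℤ → R) : ℕ → ℤ → ℤ → R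
  | 0 => oneS2 R
  | k + 1 => mulS2 f (pow2 f k)

/-- `f ∈ M((z))`: only finitely many negative powers. -/
def IsLaurent (f : ℤ → M) : Prop := ∃ N : ℤ, ∀ n : ℤ, n < N → f n = 0

/-- `f ∈ M((z,w))`: only finitely many nonzero coefficients with some negative index. -/
def IsLaurent2 (f : ℤ → ℤ → M) : Prop :=
  {p : ℤ × ℤ | (p.1 < 0 ∨ p.2 < 0) ∧ f p.1 p.2 ≠ 0}.Finite

/-- Formal derivative of a one-variable series. -/
def fderiv1 (f : ℤ → R) : ℤ → R := fun n => ((n + 1 : ℤ) : R) * f (n + 1)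

/-- The polynomial `z - w` as a two-variable series. -/
def zmw (R : Type*) [CommRing R] : ℤ → ℤ → R :=
  fun i j => if i = 1 ∧ j = 0 then 1 else if i = 0 ∧ j = 1 then -1 else 0

/-- `∂/∂w` of a two-variable series. -/
def d01 (f : ℤ → ℤ → R) : ℤ → ℤ → R := fun i j => ((j + 1 : ℤ) : R) * f i (j + 1)

/-- `∂/∂z` of a two-variable series. -/
def d10 (f : ℤ → ℤ → R) : ℤ → ℤ → R := fun i j => ((i + 1 : ℤ) : R) * f (i + 1) j

/-- Substitution `p(f(z,w))` of a two-variable series (zero constant term) into a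
one-variable power series `p`. -/
def comp2 (p : ℤ → R) (f : ℤ → ℤ → R) : ℤ → ℤ → R :=
  fun a b => ∑ᶠ m : ℕ, p (m : ℤ) * pow2 f m a b

/-- Substitution `p(f(z))` of a one-variable series (zero constant term) into a
one-variable power series `p`. -/
def comp1 (p : ℤ → R) (f : ℤ → R) : ℤ → R :=
  fun a => ∑ᶠ m : ℕ, p (m : ℤ) * pow1 f m a

/-- `(G - z)/z` for `G ≡ z (mod w)`. -/
def hzS (G : ℤ → ℤ → R) : ℤ → ℤ → R := fun i j => G (i + 1) j - oneS2 R i j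

/-- Integer powers `i_{z,w} G^n`, for `G ≡ z (mod w)`, expanded in `R((z))⟦w⟧`:
the Newton expansion `z^n ∑_k C(n,k) ((G-z)/z)^k`. -/
def izwPow (G : ℤ → ℤ → R) (n : ℤ) : ℤ → ℤ → R :=
  fun a b => ∑ᶠ k : ℕ, (zbinom n k : R) * pow2 (hzS G) k (a - n) b

/-- `(G - w)/w` for `G ≡ w (mod z)`. -/
def hwS (G : ℤ → ℤ → R) : ℤ → ℤ → R := fun i j => G i (j + 1) - oneS2 R i j

/-- Integer powers `i_{w,z} G^n`, for `G ≡ w (mod z)`, expanded in `R((w))⟦z⟧`. -/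
def iwzPow (G : ℤ → ℤ → R) (n : ℤ) : ℤ → ℤ → R :=
  fun a b => ∑ᶠ k : ℕ, (zbinom n k : R) * pow2 (hwS G) k a (b - n)

/-- `(G + w)/(-w)` for `G ≡ ι(w) (mod z)`. -/
def hwNegS (G : ℤ → ℤ → R) : ℤ → ℤ → R := fun i j => -G i (j + 1) - oneS2 R i j

/-- Integer powers `i_{w,z} G^n`, for `G ≡ -w(1+⋯) (mod z)` (e.g. `G = F(z, ι w)`),
expanded in `R((w))⟦z⟧`. -/
def iwzPowNeg (G : ℤ → ℤ → R) (n : ℤ) : ℤ → ℤ → R :=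
  fun a b => (msign n : R) * ∑ᶠ k : ℕ, (zbinom n k : R) * pow2 (hwNegS G) k a (b - n)

/-- `(f + z)/(-z)` for a series `f = -z(1 + ⋯)` such as `ι(z)`. -/
def hS (f : ℤ → R) : ℤ → R := fun j => -f (j + 1) - oneS R j

/-- Integer powers `f(z)^n` (`n : ℤ`) for `f = -z(1+⋯)`, e.g. `f = ι(z)`. -/
def iotaPow (f : ℤ → R) (n : ℤ) : ℤ → R :=
  fun a => (msign n : R) * ∑ᶠ k : ℕ, (zbinom n k : R) * pow1 (hS f) k (a - n)

/-- `f - 1` for a power series with constant term `1`. -/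
def hOneS (f : ℤ → R) : ℤ → R := fun j => f j - oneS R j

/-- Multiplicative inverse of a power series with constant term `1`. -/
def invOne (f : ℤ → R) : ℤ → R :=
  fun a => ∑ᶠ k : ℕ, ((-1 : R) ^ k) * pow1 (hOneS f) k a

end Series

/-- A (one-dimensional, commutative) formal group law `F(z,w)` over `R`, together with
its (unique) inverse `ι`. -/
structure FormalGroupLaw (R : Type*) [CommRing R] where
  F : ℤ → ℤ → R
  F_supp : ∀ i j : ℤ, i < 0 ∨ j < 0 → F i j = 0
  /-- `F(z,0) = z`, so that `F(z,w) = z + w + O(zw)` using commutativity. -/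
  F_modw : ∀ i : ℤ, F i 0 = if i = 1 then 1 else 0
  F_comm : ∀ i j : ℤ, F i j = F j i
  /-- associativity `F(F(z,w),v) = F(z,F(w,v))`, coefficient-wise. -/
  F_assoc : ∀ a b c : ℤ,
    (∑ᶠ m : ℕ, F (m : ℤ) c * pow2 F m a b) = ∑ᶠ n : ℕ, F a (n : ℤ) * pow2 F n b c
  /-- the inverse `ι(z) = -z + O(z²)`. -/
  inv : ℤ → R
  inv_supp : ∀ n : ℤ, n < 1 → inv n = 0
  inv_one : inv 1 = -1
  /-- `F(z, ι(z)) = 0`, coefficient-wise. -/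
  inv_eq : ∀ n : ℤ, (∑ᶠ p : ℤ × ℕ, F p.1 (p.2 : ℤ) * pow1 inv p.2 (n - p.1)) = 0

namespace FormalGroupLaw

variable {R : Type*} [CommRing R] {M : Type*} [AddCommGroup M] [Module R M]

/-- The series `F(z, ι(w))`. -/
def Fzi (𝓕 : FormalGroupLaw R) : ℤ → ℤ → R :=
  fun i j => ∑ᶠ m : ℕ, 𝓕.F i (m : ℤ) * pow1 𝓕.inv m j

/-- The `F`-delta distribution `z⁻¹δ_F(w/z) = i_{z,w}F(z,ιw)⁻¹ - i_{w,z}F(z,ιw)⁻¹`. -/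
def delta (𝓕 : FormalGroupLaw R) : ℤ → ℤ → R :=
  fun a b => izwPow 𝓕.Fzi (-1) a b - iwzPowNeg 𝓕.Fzi (-1) a b

/-- `p_F(z) = F^{0,1}(z,0)⁻¹`, the coefficient series of the invariant 1-form. -/
def pF (𝓕 : FormalGroupLaw R) : ℤ → R := invOne (fun i => 𝓕.F i 1)

/-- `F`-residue: the coefficient of `z⁻¹` in `f(z)·p_F(z)`. -/
def resF (𝓕 : FormalGroupLaw R) (f : ℤ → M) : M := ∑ᶠ i : ℤ, 𝓕.pF i • f (-1 - i)

/-- The `F`-hyperderivative `𝒮^F_n f`, defined by `i_{z,w}f(F(z,w)) = ∑_n (𝒮^F_n f)(z) wⁿ`. -/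
def hyper (𝓕 : FormalGroupLaw R) (n : ℕ) (f : ℤ → R) : ℤ → R :=
  fun a => ∑ᶠ m : ℤ, f m * izwPow 𝓕.F m a (n : ℤ)

/-- `F`-binomial coefficients: `i_{z,w}F(z,w)^n = ∑_{i,j} binomF(n;i,j) z^i w^j`. -/
def binomF (𝓕 : FormalGroupLaw R) (n i j : ℤ) : R := izwPow 𝓕.F n i j

/-- `φ` is a logarithm of `F`: `φ(F(z,w)) = φ(z) + φ(w)`, `φ(0) = 0`, `φ'(0) = 1`. -/
def IsLogarithm (𝓕 : FormalGroupLaw R) (φ : ℤ → R) : Prop :=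
  (∀ n : ℤ, n < 0 → φ n = 0) ∧ φ 0 = 0 ∧ φ 1 = 1 ∧
  ∀ a b : ℤ, (∑ᶠ m : ℕ, φ (m : ℤ) * pow2 𝓕.F m a b)
    = (if b = 0 then φ a else 0) + (if a = 0 then φ b else 0)

end FormalGroupLaw

section Vertex

variable {R : Type*} [CommRing R] {V : Type*} [AddCommGroup V] [Module R V]

/-- For `c = ∑_m c_m v^m ∈ V((v))`, the substitution `v ↦ F(z,w)` (coefficient `(k,n)` of
`z^k w^n`, expanded in `V((z))⟦w⟧`). -/
def substF (𝓕 : FormalGroupLaw R) (c : ℤ → V) : ℤ → ℤ → V :=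
  fun k n => ∑ᶠ m : ℤ, izwPow 𝓕.F m k n • c m

/-- Coefficients of `i_{z,w} Y(a, F(z,w)) (Y(b,w)c)`, where `Ya v = Y(a,·)v` and
`d = Y(b,·)c`. -/
def substFProd (𝓕 : FormalGroupLaw R) (Ya : V → ℤ → V) (d : ℤ → V) : ℤ → ℤ → V :=
  fun k n => ∑ᶠ q : ℤ × ℤ, izwPow 𝓕.F q.1 k (n - q.2) • Ya (d q.2) q.1

end Vertex

/-- A vertex `F`-algebra `(V, 𝟙, 𝒮, Y)` over the formal group law `𝓕`.
`Y a b : ℤ → V` records the coefficients of `Y(a,z)b = ∑_k (Y a b k) z^k`, and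
`S n` is the component `𝒮⁽ⁿ⁾` of the `F`-shift operator `𝒮(z) = ∑_{n≥0} 𝒮⁽ⁿ⁾ zⁿ`. -/
structure VertexFAlgebra (R : Type*) [CommRing R] (𝓕 : FormalGroupLaw R)
    (V : Type*) [AddCommGroup V] [Module R V] where
  vac : V
  S : ℕ → V →ₗ[R] V
  Y : V →ₗ[R] V →ₗ[R] (ℤ → V)
  /-- `Y(a,z)b ∈ V((z))`. -/
  Y_laurent : ∀ a b : V, IsLaurent (Y a b)
  /-- `Y(a,z)𝟙` is holomorphic. -/
  vac_holo : ∀ (a : V) (k : ℤ), k < 0 → Y a vac k = 0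
  /-- `Y(a,z)𝟙|_{z=0} = a`. -/
  creation : ∀ a : V, Y a vac 0 = a
  /-- `Y(𝟙,z) = id`. -/
  Y_vac : ∀ (b : V) (k : ℤ), Y vac b k = if k = 0 then b else 0
  /-- `𝒮(0) = id`. -/
  S_zero : S 0 = LinearMap.id
  /-- `𝒮(z)𝟙 = 𝟙`. -/
  S_vac : ∀ n : ℕ, 1 ≤ n → S n vac = 0
  /-- `𝒮(z) ∘ 𝒮(w) = 𝒮(F(z,w))`, coefficient-wise. -/
  S_comp : ∀ (a : V) (i j : ℕ),
    S i (S j a) = ∑ᶠ m : ℕ, pow2 𝓕.F m (i : ℤ) (j : ℤ) • S m a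
  /-- `F`-translation covariance `Y(𝒮(w)a, z)b = i_{z,w} Y(a,F(z,w))b`. -/
  translation : ∀ (a b : V) (k : ℤ) (n : ℕ),
    Y (S n a) b k = substF 𝓕 (Y a b) k (n : ℤ)
  /-- weak `F`-associativity. -/
  weak_assoc : ∀ a b c : V, ∃ N : ℕ,
    mulS2 (pow2 𝓕.F N) (fun k l => Y (Y a b k) c l)
      = mulS2 (pow2 𝓕.F N) (substFProd 𝓕 (fun v => Y a v) (Y b c))
  /-- skew symmetry `Y(a,z)b = 𝒮(z)(Y(b,ι(z))a)`, coefficient-wise. -/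
  skew : ∀ (a b : V) (k : ℤ),
    Y a b k = ∑ᶠ q : ℕ × ℤ, iotaPow 𝓕.inv q.2 (k - (q.1 : ℤ)) • S q.1 (Y b a q.2)

end

noncomputable section HahnTools

variable {Γ R : Type*} [AddCommGroup Γ] [LinearOrder Γ] [IsOrderedAddMonoid Γ] [CommRing R]

open HahnSeries

theorem isPWO_sub_finite {S T : Set Γ} (hS : S.IsPWO) (hT : T.IsPWO) (n : Γ) :
    {γ | γ ∈ S ∧ n - γ ∈ T}.Finite := by
  refine ((Set.AddAntidiagonal.finite_of_isPWO hS hT n).image Prod.fst).subset ?_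
  rintro γ ⟨h1, h2⟩
  exact ⟨(γ, n - γ), ⟨h1, h2, by simp⟩, rfl⟩

theorem hahn_mul_hasFiniteSupport (f g : HahnSeries Γ R) (n : Γ) :
    (fun γ => f.coeff γ * g.coeff (n - γ)).HasFiniteSupport :=
  (isPWO_sub_finite f.isPWO_support g.isPWO_support n).subset fun _ h =>
    ⟨left_ne_zero_of_mul h, right_ne_zero_of_mul h⟩

theorem hahn_coeff_mul (f g : HahnSeries Γ R) (n : Γ) :
    (f * g).coeff n = ∑ᶠ γ, f.coeff γ * g.coeff (n - γ) := by
  rw [HahnSeries.coeff_mul]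
  symm
  rw [finsum_eq_sum_of_support_subset
    (s := (Finset.antidiagonal f.isPWO_support g.isPWO_support n).image Prod.fst)]
  · rw [Finset.sum_image]
    · refine Finset.sum_congr rfl fun p hp => ?_
      rw [Finset.mem_antidiagonal] at hp
      rw [← hp.2.2, add_sub_cancel_left]
    · intro p hp q hq h
      rw [Finset.mem_coe, Finset.mem_antidiagonal] at hp hq
      exact Prod.ext h (add_left_cancel (a := p.1) (by rw [hp.2.2, h, hq.2.2]))
  · intro γ hγ
    rw [Finset.coe_image]
    refine ⟨(γ, n - γ), ?_, rfl⟩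
    rw [Finset.mem_coe, Finset.mem_antidiagonal]
    exact ⟨left_ne_zero_of_mul hγ, right_ne_zero_of_mul hγ, by simp⟩

/-- A substitution of the generators of a ring of Hahn series by series of the shape
`monomial * (1 + higher order terms)`. -/
structure MonomialSubst (Γ R : Type*) [AddCommGroup Γ] [LinearOrder Γ] [IsOrderedAddMonoid Γ]
    [CommRing R] where
  u : Multiplicative Γ →* HahnSeries Γ R
  dom : Set Γ
  pwo : dom.IsPWO
  sub : ∀ γ δ : Γ, (u (Multiplicative.ofAdd γ)).coeff δ ≠ 0 → δ - γ ∈ dom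

namespace MonomialSubst

variable (s : MonomialSubst Γ R)

/-- The image of the monomial of exponent `γ`. -/
def img (γ : Γ) : HahnSeries Γ R := s.u (Multiplicative.ofAdd γ)

theorem img_add (γ δ : Γ) : s.img (γ + δ) = s.img γ * s.img δ := by
  simp [img, ofAdd_add]

theorem img_zero : s.img 0 = 1 := by simp [img]

/-- The summable family whose sum is the substituted series. -/
def fam (h : HahnSeries Γ R) : SummableFamily Γ R Γ where
  toFun γ := h.coeff γ • s.img γ
  isPWO_iUnion_support' := by
    refine (h.isPWO_support.add s.pwo).mono ?_
    intro n hn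
    simp only [Set.mem_iUnion, mem_support, coeff_smul, smul_eq_mul] at hn
    obtain ⟨γ, hγ⟩ := hn
    exact ⟨γ, left_ne_zero_of_mul hγ, n - γ, s.sub _ _ (right_ne_zero_of_mul hγ), by simp⟩
  finite_co_support' n := by
    refine (isPWO_sub_finite h.isPWO_support s.pwo n).subset fun γ hγ => ?_
    simp only [coeff_smul, smul_eq_mul] at hγ
    exact ⟨left_ne_zero_of_mul hγ, s.sub _ _ (right_ne_zero_of_mul hγ)⟩

theorem fam_apply (h : HahnSeries Γ R) (γ : Γ) : s.fam h γ = h.coeff γ • s.img γ := rfl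

/-- The substitution as a map on series. -/
def ap (h : HahnSeries Γ R) : HahnSeries Γ R := (s.fam h).hsum

theorem coeff_ap (h : HahnSeries Γ R) (n : Γ) :
    (s.ap h).coeff n = ∑ᶠ γ, h.coeff γ * (s.img γ).coeff n := by
  simp [ap, fam_apply]

theorem coeff_ap_mul (h P : HahnSeries Γ R) (n : Γ) :
    (s.ap h * P).coeff n = ∑ᶠ γ, h.coeff γ * (s.img γ * P).coeff n := by
  have : s.ap h * P = (P • s.fam h).hsum := by
    rw [SummableFamily.hsum_smul, mul_comm]; rfl
  rw [this, SummableFamily.coeff_hsum]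
  refine finsum_congr fun γ => ?_
  rw [SummableFamily.smul_apply, of_symm_smul_of_eq_mul, fam_apply, mul_smul_comm, mul_comm P,
    coeff_smul, smul_eq_mul]

theorem coeff_ap_hasFiniteSupport (h : HahnSeries Γ R) (n : Γ) :
    (fun γ => h.coeff γ * (s.img γ).coeff n).HasFiniteSupport := by
  simpa [fam_apply] using (s.fam h).finite_co_support n

theorem coeff_ap_mul_hasFiniteSupport (h P : HahnSeries Γ R) (n : Γ) :
    (fun γ => h.coeff γ * (s.img γ * P).coeff n).HasFiniteSupport := by
  have := (P • s.fam h).finite_co_support n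
  simpa only [SummableFamily.smul_apply, of_symm_smul_of_eq_mul, fam_apply, mul_smul_comm,
    mul_comm P, smul_mul_assoc, coeff_smul, smul_eq_mul] using this

theorem ap_add (f g : HahnSeries Γ R) : s.ap (f + g) = s.ap f + s.ap g := by
  ext n
  simp only [coeff_ap, coeff_add, add_mul]
  exact finsum_add_distrib (s.coeff_ap_hasFiniteSupport f n) (s.coeff_ap_hasFiniteSupport g n)

theorem ap_single (γ : Γ) (r : R) : s.ap (single γ r) = r • s.img γ := by
  ext n
  rw [coeff_ap, finsum_eq_single _ γ]
  · simp
  · intro δ hδ; rw [coeff_single_of_ne hδ, zero_mul]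

theorem ap_one : s.ap 1 = 1 := by
  have := s.ap_single 0 1
  rwa [single_zero_one, img_zero, one_smul] at this

theorem ap_mul (f g : HahnSeries Γ R) : s.ap (f * g) = s.ap f * s.ap g := by
  ext n
  have hR : s.ap f * s.ap g = ((s.fam f).mul (s.fam g)).hsum := by
    rw [SummableFamily.hsum_mul]; rfl
  rw [hR, SummableFamily.coeff_hsum, coeff_ap]
  let e : Γ × Γ ≃ Γ × Γ :=
    { toFun := fun p => (p.2, p.1 - p.2)
      invFun := fun p => (p.1 + p.2, p.1)
      left_inv := fun p => by simp
      right_inv := fun p => by simp }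
  have hfin := ((s.fam f).mul (s.fam g)).finite_co_support n
  rw [← finsum_comp_equiv e, finsum_curry]
  · refine finsum_congr fun ε => ?_
    rw [hahn_coeff_mul, finsum_mul' _ _ (hahn_mul_hasFiniteSupport f g ε)]
    refine finsum_congr fun γ => ?_
    simp only [SummableFamily.mul_toFun, fam_apply, e, Equiv.coe_fn_mk]
    rw [smul_mul_smul_comm, ← img_add, add_sub_cancel, coeff_smul, smul_eq_mul]
  · exact Set.Finite.preimage e.injective.injOn hfin

/-- The substitution as a ring homomorphism. -/
def hom : HahnSeries Γ R →+* HahnSeries Γ R where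
  toFun := s.ap
  map_one' := s.ap_one
  map_mul' := s.ap_mul
  map_zero' := by ext n; simp [coeff_ap]
  map_add' := s.ap_add

end MonomialSubst

/-- The Euler derivation attached to an additive weight on the exponents. -/
def euler (φ : Γ →+ ℤ) (f : HahnSeries Γ R) : HahnSeries Γ R where
  coeff γ := (φ γ : R) * f.coeff γ
  isPWO_support' := f.isPWO_support.mono fun _ h => right_ne_zero_of_mul h

theorem coeff_euler {Γ : Type*} [AddCommGroup Γ] [LinearOrder Γ] (φ : Γ →+ ℤ)
    (f : HahnSeries Γ R) (γ : Γ) :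
    (euler φ f).coeff γ = (φ γ : R) * f.coeff γ := rfl

theorem euler_mul (φ : Γ →+ ℤ) (f g : HahnSeries Γ R) :
    euler φ (f * g) = euler φ f * g + f * euler φ g := by
  ext n
  simp only [coeff_euler, coeff_add, hahn_coeff_mul]
  rw [← finsum_add_distrib, mul_finsum' _ _ (hahn_mul_hasFiniteSupport f g n)]
  · refine finsum_congr fun γ => ?_
    have : φ n = φ γ + φ (n - γ) := by rw [← map_add, add_sub_cancel]
    rw [this]; push_cast; ring
  · exact (hahn_mul_hasFiniteSupport (euler φ f) g n)
  · exact (hahn_mul_hasFiniteSupport f (euler φ g) n)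

/-- The Euler derivation as a derivation. -/
def eulerD (φ : Γ →+ ℤ) : Derivation ℤ (HahnSeries Γ R) (HahnSeries Γ R) :=
  Derivation.mk' ((AddMonoidHom.mk' (euler φ) (fun f g => by
    ext n; simp only [coeff_euler, coeff_add]; ring)).toIntLinearMap) (fun f g => by
      simp only [AddMonoidHom.coe_toIntLinearMap, AddMonoidHom.mk'_apply, euler_mul, smul_eq_mul]
      ring)

theorem eulerD_apply (φ : Γ →+ ℤ) (f : HahnSeries Γ R) : eulerD φ f = euler φ f := rfl

end HahnTools

noncomputable section HahnResidue

variable {Γ R : Type*} [AddCommGroup Γ] [LinearOrder Γ] [IsOrderedAddMonoid Γ] [CommRing R]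

open HahnSeries

/-- The ring homomorphism of Hahn series induced by one of coefficient rings. -/
def hahnMap {S : Type*} [CommRing S] (f : R →+* S) : HahnSeries Γ R →+* HahnSeries Γ S where
  toFun h := h.map f
  map_one' := HahnSeries.map_one f.toMonoidWithZeroHom
  map_mul' _ _ := HahnSeries.map_mul f.toNonUnitalRingHom
  map_zero' := by ext n; simp
  map_add' _ _ := by ext n; simp

theorem coeff_hahnMap {S : Type*} [CommRing S] (f : R →+* S) (h : HahnSeries Γ R) (n : Γ) :
    (hahnMap f h).coeff n = f (h.coeff n) := rfl

theorem euler_map {S : Type*} [CommRing S] (f : R →+* S) (φ : Γ →+ ℤ) (h : HahnSeries Γ R) :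
    euler φ (hahnMap f h) = hahnMap f (euler φ h) := by
  ext n; simp [coeff_euler, coeff_hahnMap]

theorem euler_coeff_eq_zero {Γ : Type*} [AddCommGroup Γ] [LinearOrder Γ] (φ : Γ →+ ℤ)
    (f : HahnSeries Γ R) {n : Γ} (hn : φ n = 0) :
    (euler φ f).coeff n = 0 := by
  rw [coeff_euler, hn, Int.cast_zero, zero_mul]

/-- Every ring is a quotient of a torsion-free one, so `h ^ k * θ h` is
formally the derivative of `h ^ (k + 1) / (k + 1)`. -/
theorem coeff_pow_mul_euler (φ : Γ →+ ℤ) (h : HahnSeries Γ R) (k : ℕ) {n : Γ} (hn : φ n = 0) :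
    (h ^ k * euler φ h).coeff n = 0 := by
  classical
  let p : MvPolynomial R ℤ →+* R := (MvPolynomial.aeval (R := ℤ) (fun r : R => r)).toRingHom
  let h0 : HahnSeries Γ (MvPolynomial R ℤ) :=
    { coeff := fun γ => if h.coeff γ = 0 then 0 else MvPolynomial.X (h.coeff γ)
      isPWO_support' := h.isPWO_support.mono fun γ hγ => by
        intro h0
        simp [h0] at hγ }
  have hmap : hahnMap p h0 = h := by
    ext γ
    simp only [coeff_hahnMap, h0]
    split_ifs with hz
    · simp [hz]
    · simp [p]
  have key : (h0 ^ k * euler φ h0).coeff n = 0 := by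
    have h1 : eulerD φ (h0 ^ (k + 1)) = (k + 1 : ℕ) • (h0 ^ k * euler φ h0) := by
      rw [Derivation.leibniz_pow]; simp [eulerD_apply]
    have h2 : ((k + 1 : ℕ) • (h0 ^ k * euler φ h0)).coeff n = 0 := by
      rw [← h1, eulerD_apply, euler_coeff_eq_zero φ _ hn]
    rw [coeff_smul] at h2
    exact (smul_eq_zero.1 h2).resolve_left (Nat.succ_ne_zero k)
  rw [← hmap, euler_map, ← map_pow, ← map_mul, coeff_hahnMap, key, map_zero]

theorem heval_one_add_X {h : HahnSeries Γ R} (hh : 0 < h.orderTop) :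
    PowerSeries.heval (R := R) h (PowerSeries.binomialSeries R (1 : ℤ)) = 1 + h := by
  have := PowerSeries.binomialSeries_nat (R := ℤ) (A := R) 1
  rw [Nat.cast_one, pow_one] at this
  rw [this, map_add, PowerSeries.heval_X _ hh, map_one]

theorem coeff_heval_mul {h : HahnSeries Γ R} (hh : 0 < h.orderTop) (f : PowerSeries R)
    (P : HahnSeries Γ R) (n : Γ) :
    (PowerSeries.heval h f * P).coeff n = ∑ᶠ k, f.coeff k * (h ^ k * P).coeff n := by
  have : PowerSeries.heval h f * P = (P • SummableFamily.powerSeriesFamily h f).hsum := by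
    rw [SummableFamily.hsum_smul, mul_comm]; rfl
  rw [this, SummableFamily.coeff_hsum]
  refine finsum_congr fun γ => ?_
  rw [SummableFamily.smul_apply, of_symm_smul_of_eq_mul,
    SummableFamily.powerSeriesFamily_of_orderTop_pos hh, mul_smul_comm, mul_comm P, coeff_smul,
    smul_eq_mul]

/-- The unit `1 + h` for a series `h` of positive order. -/
def oneAddUnit (h : HahnSeries Γ R) (hh : 0 < h.orderTop) : (HahnSeries Γ R)ˣ where
  val := 1 + h
  inv := PowerSeries.heval h (PowerSeries.binomialSeries R (-1 : ℤ))
  val_inv := by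
    rw [← heval_one_add_X hh, ← map_mul, ← PowerSeries.binomialSeries_add, add_neg_cancel,
      PowerSeries.binomialSeries_zero, map_one]
  inv_val := by
    rw [← heval_one_add_X hh, ← map_mul, ← PowerSeries.binomialSeries_add, neg_add_cancel,
      PowerSeries.binomialSeries_zero, map_one]

theorem oneAddUnit_val (h : HahnSeries Γ R) (hh : 0 < h.orderTop) :
    (oneAddUnit h hh : HahnSeries Γ R) = 1 + h := rfl

theorem oneAddUnit_zpow (h : HahnSeries Γ R) (hh : 0 < h.orderTop) (n : ℤ) :
    ((oneAddUnit h hh ^ n : (HahnSeries Γ R)ˣ) : HahnSeries Γ R) =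
      PowerSeries.heval h (PowerSeries.binomialSeries R n) := by
  have h1 := heval_one_add_X hh
  induction n with
  | zero => rw [zpow_zero, Units.val_one, PowerSeries.binomialSeries_zero, map_one]
  | succ n ih =>
    rw [zpow_add_one, Units.val_mul, ih, PowerSeries.binomialSeries_add, map_mul, h1]; rfl
  | pred n ih =>
    rw [zpow_sub_one, Units.val_mul, ih, sub_eq_add_neg, PowerSeries.binomialSeries_add, map_mul]
    rfl

theorem euler_inv (φ : Γ →+ ℤ) (U : (HahnSeries Γ R)ˣ) :
    euler φ (↑U⁻¹ : HahnSeries Γ R) = - ((↑U⁻¹ : HahnSeries Γ R) ^ 2 * euler φ (U : HahnSeries Γ R)) := by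
  have h1 : euler φ ((U : HahnSeries Γ R) * (↑U⁻¹ : HahnSeries Γ R)) = 0 := by
    rw [Units.mul_inv]; exact (eulerD φ).map_one_eq_zero
  rw [euler_mul] at h1
  have h2 : (↑U⁻¹ : HahnSeries Γ R) * ↑U = 1 := Units.inv_mul U
  linear_combination (↑U⁻¹ : HahnSeries Γ R) * h1 - euler φ (↑U⁻¹ : HahnSeries Γ R) * h2

theorem euler_zpow (φ : Γ →+ ℤ) (U : (HahnSeries Γ R)ˣ) (n : ℤ) :
    euler φ (↑(U ^ n) : HahnSeries Γ R) = (n : HahnSeries Γ R) * ((↑(U ^ n) : HahnSeries Γ R) * ((↑U⁻¹ : HahnSeries Γ R) * euler φ (U : HahnSeries Γ R))) := by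
  have h2 : (↑U⁻¹ : HahnSeries Γ R) * ↑U = 1 := Units.inv_mul U
  induction n with
  | zero => simp; exact (eulerD φ).map_one_eq_zero
  | succ n ih =>
    rw [zpow_add_one, Units.val_mul, euler_mul, ih]
    push_cast
    linear_combination (-(euler φ ↑U) * ↑(U ^ (n : ℤ))) * h2
  | pred n ih =>
    rw [zpow_sub_one, Units.val_mul, euler_mul, ih, euler_inv]
    push_cast
    ring

/-- The residue theorem for the logarithmic-type differentials `U ^ n dU`. -/
theorem coeff_zpow_mul_euler (φ : Γ →+ ℤ) (U : (HahnSeries Γ R)ˣ) {γ : Γ} {c : Rˣ}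
    {h : HahnSeries Γ R} (hh : 0 < h.orderTop) (hU : (U : HahnSeries Γ R) = single γ (c : R) * (1 + h))
    (m : ℤ) {n : Γ} (hn : φ n = 0) :
    ((↑(U ^ m) : HahnSeries Γ R) * euler φ (U : HahnSeries Γ R)).coeff n =
      if m = -1 ∧ n = 0 then (φ γ : R) else 0 := by
  rcases lt_trichotomy m (-1) with hm | rfl | hm
  · rw [if_neg (by omega)]
    obtain ⟨k, rfl⟩ : ∃ k : ℕ, m = -(k + 2 : ℕ) := ⟨(-m - 2).toNat, by omega⟩
    have := coeff_pow_mul_euler φ (↑U⁻¹ : HahnSeries Γ R) k hn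
    rw [euler_inv, mul_neg, coeff_neg, neg_eq_zero, ← mul_assoc, ← _root_.pow_add] at this
    rw [zpow_neg, ← inv_zpow, zpow_natCast, Units.val_pow_eq_pow_val]
    exact this
  · have hs : (single γ (c : R)) * (single (-γ) (↑c⁻¹ : R)) = 1 := by
      rw [single_mul_single]; simp
    have h3 : (↑(oneAddUnit h hh)⁻¹ : HahnSeries Γ R) * (1 + h) = 1 :=
      Units.inv_mul (oneAddUnit h hh)
    have hinv : (↑U⁻¹ : HahnSeries Γ R) =
        single (-γ) (↑c⁻¹ : R) * (↑(oneAddUnit h hh)⁻¹ : HahnSeries Γ R) := by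
      refine Units.inv_eq_of_mul_eq_one_right ?_
      rw [hU]
      linear_combination (1 + h) * (↑(oneAddUnit h hh)⁻¹ : HahnSeries Γ R) * hs + h3
    have he : euler φ (single γ (c : R)) = (φ γ : HahnSeries Γ R) * single γ (c : R) := by
      ext n
      rw [coeff_euler, ← single_zero_intCast, coeff_single_zero_mul]
      by_cases hn : n = γ
      · rw [hn]
      · rw [coeff_single_of_ne hn, mul_zero, mul_zero]
    have h4 : euler φ (1 + h) = euler φ h := by
      have : eulerD φ (1 + h) = eulerD φ h := by simp
      exact this
    have h5 : (↑(U ^ (-1 : ℤ)) : HahnSeries Γ R) * euler φ U =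
        (φ γ : HahnSeries Γ R) + (↑(oneAddUnit h hh ^ (-1 : ℤ)) : HahnSeries Γ R) * euler φ h := by
      rw [zpow_neg_one, zpow_neg_one, hinv, hU, euler_mul, he, h4]
      linear_combination ((↑(oneAddUnit h hh)⁻¹ : HahnSeries Γ R) * (1 + h) * (φ γ : HahnSeries Γ R) +
        (↑(oneAddUnit h hh)⁻¹ : HahnSeries Γ R) * euler φ h) * hs + (φ γ : HahnSeries Γ R) * h3
    rw [h5, coeff_add, oneAddUnit_zpow, coeff_heval_mul hh]
    simp only [coeff_pow_mul_euler φ h _ hn, mul_zero, finsum_zero, add_zero, true_and]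
    rw [← single_zero_intCast]
    split_ifs with h0
    · rw [h0, coeff_single_same]
    · rw [coeff_single_of_ne h0]
  · rw [if_neg (by omega)]
    obtain ⟨k, rfl⟩ : ∃ k : ℕ, m = k := ⟨m.toNat, by omega⟩
    rw [zpow_natCast, Units.val_pow_eq_pow_val]
    exact coeff_pow_mul_euler φ _ k hn

/-- The chain rule for the Euler derivation. -/
theorem MonomialSubst.euler_ap (s : MonomialSubst Γ R) (φ φ₁ φ₂ : Γ →+ ℤ) (α β : HahnSeries Γ R)
    (hs : ∀ γ, euler φ (s.img γ) = s.img γ * ((φ₁ γ : HahnSeries Γ R) * α + (φ₂ γ : HahnSeries Γ R) * β)) (h : HahnSeries Γ R) :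
    euler φ (s.ap h) = s.ap (euler φ₁ h) * α + s.ap (euler φ₂ h) * β := by
  ext n
  rw [coeff_add, s.coeff_ap_mul, s.coeff_ap_mul, coeff_euler, s.coeff_ap,
    ← finsum_add_distrib (s.coeff_ap_mul_hasFiniteSupport _ _ _)
      (s.coeff_ap_mul_hasFiniteSupport _ _ _), mul_finsum' _ _ (s.coeff_ap_hasFiniteSupport _ _)]
  refine finsum_congr fun γ => ?_
  have h1 : (euler φ (s.img γ)).coeff n = (φ₁ γ : R) * (s.img γ * α).coeff n + (φ₂ γ : R) * (s.img γ * β).coeff n := by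
    rw [hs, mul_add, mul_left_comm, mul_left_comm _ (φ₂ γ : HahnSeries Γ R), coeff_add]
    rw [← single_zero_intCast, ← single_zero_intCast, coeff_single_zero_mul, coeff_single_zero_mul]
  rw [coeff_euler] at h1
  rw [coeff_euler, coeff_euler]
  linear_combination h.coeff γ * h1

end HahnResidue

noncomputable section TwoVariables

open HahnSeries

/-- The exponent of the monomial `x ^ i * y ^ j` in `R((x))((y))`. -/
def xy (i j : ℤ) : ℤ ×ₗ ℤ := toLex (j, i)

/-- The ring `R((x))((y))`. -/
abbrev LaurentXY (R : Type*) [CommRing R] := HahnSeries (ℤ ×ₗ ℤ) R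

theorem xy_add (i j k l : ℤ) : xy i j + xy k l = xy (i + k) (j + l) := rfl

theorem xy_zero : xy 0 0 = 0 := rfl

theorem xy_inj {i j k l : ℤ} : xy i j = xy k l ↔ i = k ∧ j = l := by
  rw [xy, xy, toLex_inj, Prod.mk.injEq, and_comm]

theorem xy_le {i j k l : ℤ} : xy i j ≤ xy k l ↔ j < l ∨ j = l ∧ i ≤ k := Prod.Lex.toLex_le_toLex

theorem xy_surj (γ : ℤ ×ₗ ℤ) : ∃ i j, γ = xy i j := ⟨γ.2, γ.1, rfl⟩

/-- Pairs of exponents as elements of the value group. -/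
def xyEquiv : ℤ × ℤ ≃ ℤ ×ₗ ℤ where
  toFun p := xy p.1 p.2
  invFun γ := (γ.2, γ.1)
  left_inv _ := rfl
  right_inv _ := rfl

/-- The `x`-exponent. -/
def degX : ℤ ×ₗ ℤ →+ ℤ where
  toFun γ := γ.2
  map_zero' := rfl
  map_add' _ _ := rfl

/-- The `y`-exponent. -/
def degY : ℤ ×ₗ ℤ →+ ℤ where
  toFun γ := γ.1
  map_zero' := rfl
  map_add' _ _ := rfl

@[simp] theorem degX_xy (i j : ℤ) : degX (xy i j) = i := rfl

@[simp] theorem degY_xy (i j : ℤ) : degY (xy i j) = j := rfl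

variable {R : Type*} [CommRing R]

/-- The coefficient of `x ^ i * y ^ j`. -/
def co (f : LaurentXY R) (i j : ℤ) : R := f.coeff (xy i j)

theorem co_ext {f g : LaurentXY R} (h : ∀ i j, co f i j = co g i j) : f = g := by
  ext γ
  exact h γ.2 γ.1

theorem co_add (f g : LaurentXY R) (i j : ℤ) : co (f + g) i j = co f i j + co g i j := rfl

theorem co_neg (f : LaurentXY R) (i j : ℤ) : co (-f) i j = - co f i j := rfl

theorem co_sub (f g : LaurentXY R) (i j : ℤ) : co (f - g) i j = co f i j - co g i j := rfl

theorem co_euler_degX (f : LaurentXY R) (i j : ℤ) : co (euler degX f) i j = (i : R) * co f i j := rfl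

theorem co_euler_degY (f : LaurentXY R) (i j : ℤ) : co (euler degY f) i j = (j : R) * co f i j := rfl

theorem co_mul (f g : LaurentXY R) : co (f * g) = mulS2 (co f) (co g) := by
  funext i j
  rw [co, hahn_coeff_mul, mulS2]
  exact (finsum_comp_equiv xyEquiv).symm

theorem co_one : co (1 : LaurentXY R) = oneS2 R := by
  funext i j
  rw [co, coeff_one, oneS2, ← xy_zero]
  simp only [xy_inj]

theorem co_pow (f : LaurentXY R) (k : ℕ) : co (f ^ k) = pow2 (co f) k := by
  induction k with
  | zero => rw [pow_zero, co_one, pow2]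
  | succ k ih => rw [pow_succ', co_mul, ih, pow2]

/-- The monomial `r * x ^ i * y ^ j`. -/
def mono (i j : ℤ) (r : R) : LaurentXY R := single (xy i j) r

theorem co_mono (i j : ℤ) (r : R) (k l : ℤ) :
    co (mono i j r) k l = if k = i ∧ l = j then r else 0 := by
  rw [co, mono, coeff_single]
  simp only [xy_inj]

theorem co_mono_mul (i j : ℤ) (r : R) (f : LaurentXY R) (k l : ℤ) :
    co (mono i j r * f) k l = r * co f (k - i) (l - j) := by
  have : xy k l = xy (k - i) (l - j) + xy i j := by rw [xy_add]; simp
  rw [co, mono, this, coeff_single_mul_add, co]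

theorem mono_mul (i j k l : ℤ) (r s : R) :
    mono i j r * mono k l s = mono (i + k) (j + l) (r * s) := single_mul_single ..

theorem mono_zero_one : mono 0 0 (1 : R) = 1 := rfl

/-- The series with prescribed coefficients. -/
def ofCo (f : ℤ → ℤ → R) (hy : ∃ N, ∀ j < N, ∀ i, f i j = 0) (hx : ∀ j, ∃ N, ∀ i < N, f i j = 0) :
    LaurentXY R where
  coeff γ := f γ.2 γ.1
  isPWO_support' := by
    refine Set.PartiallyWellOrderedOn.subsetProdLex (α := ℤ) (β := ℤ) ?_ ?_
    · obtain ⟨N, hN⟩ := hy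
      refine (BddBelow.isWF (s := _) ⟨N, ?_⟩).isPWO
      rintro j ⟨γ, hγ, rfl⟩
      by_contra! h
      exact hγ (hN _ h _)
    · intro j
      obtain ⟨N, hN⟩ := hx j
      refine (BddBelow.isWF (s := _) ⟨N, ?_⟩).isPWO
      intro i hi
      by_contra! h
      exact hi (hN _ h)

theorem co_ofCo (f : ℤ → ℤ → R) (hy) (hx) : co (ofCo f hy hx) = f := rfl

theorem exists_lower_bound_of_isPWO {s : Set ℤ} (hs : s.IsPWO) : ∃ N, ∀ n < N, n ∉ s := by
  rcases s.eq_empty_or_nonempty with rfl | hne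
  · exact ⟨0, fun _ _ => Set.notMem_empty _⟩
  · exact ⟨hs.isWF.min hne, fun n hn h => (hs.isWF.min_le hne h).not_gt hn⟩

theorem exists_bound_y (f : LaurentXY R) : ∃ N, ∀ j < N, ∀ i, co f i j = 0 := by
  obtain ⟨N, hN⟩ := exists_lower_bound_of_isPWO
    (Set.PartiallyWellOrderedOn.imageProdLex (α := ℤ) (β := ℤ) f.isPWO_support)
  refine ⟨N, fun j hj i => ?_⟩
  by_contra h
  exact hN j hj ⟨xy i j, h, rfl⟩

theorem finsum_eq_comp_of_injective {α β M : Type*} [AddCommMonoid M] {e : α → β}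
    (he : Function.Injective e) {g : β → M} (hg : ∀ b, b ∉ Set.range e → g b = 0) :
    ∑ᶠ b, g b = ∑ᶠ a, g (e a) := by
  rw [← finsum_mem_range he, ← finsum_mem_univ]
  refine finsum_mem_inter_support_eq' _ _ _ fun b hb => ?_
  simp only [Set.mem_univ, true_iff]
  by_contra h
  exact hb (hg b h)

/-- The exponent of a monomial in two variables. -/
def xyExp : (Fin 2 →₀ ℕ) →+ ℤ ×ₗ ℤ where
  toFun d := xy (d 0) (d 1)
  map_zero' := rfl
  map_add' d e := by simp [xy_add]

theorem xyExp_apply (d : Fin 2 →₀ ℕ) : xyExp d = xy (d 0) (d 1) := rfl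

theorem xyExp_injective : Function.Injective xyExp := by
  intro d e h
  rw [xyExp_apply, xyExp_apply, xy_inj] at h
  ext i
  fin_cases i
  · exact_mod_cast h.1
  · exact_mod_cast h.2

theorem mem_range_xyExp {i j : ℤ} : xy i j ∈ Set.range xyExp ↔ 0 ≤ i ∧ 0 ≤ j := by
  constructor
  · rintro ⟨d, hd⟩
    rw [xyExp_apply, xy_inj] at hd
    omega
  · rintro ⟨hi, hj⟩
    refine ⟨Finsupp.equivFunOnFinite.symm ![i.toNat, j.toNat], ?_⟩
    rw [xyExp_apply, xy_inj]
    simp [hi, hj]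

/-- Power series in two variables as elements of `R((x))((y))`. -/
def embFun (f : MvPowerSeries (Fin 2) R) : LaurentXY R :=
  ofCo (fun i j => if 0 ≤ i ∧ 0 ≤ j then
      MvPowerSeries.coeff (Finsupp.equivFunOnFinite.symm ![i.toNat, j.toNat]) f else 0)
    ⟨0, fun j hj i => if_neg (by omega)⟩ fun j => ⟨0, fun i hi => if_neg (by omega)⟩

theorem embFun_coeff (f : MvPowerSeries (Fin 2) R) (d : Fin 2 →₀ ℕ) :
    (embFun f).coeff (xyExp d) = MvPowerSeries.coeff d f := by
  have : co (embFun f) (d 0) (d 1) = MvPowerSeries.coeff d f := by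
    rw [embFun, co_ofCo, if_pos (by omega)]
    congr 1
    congr 1
    ext i; fin_cases i <;> simp
  exact this

theorem embFun_coeff_of_notMem (f : MvPowerSeries (Fin 2) R) {γ : ℤ ×ₗ ℤ}
    (h : γ ∉ Set.range xyExp) : (embFun f).coeff γ = 0 := by
  obtain ⟨i, j, rfl⟩ := xy_surj γ
  rw [mem_range_xyExp] at h
  exact if_neg h

theorem embFun_ext {f g : LaurentXY R} (h1 : ∀ d, f.coeff (xyExp d) = g.coeff (xyExp d))
    (h2 : ∀ γ, γ ∉ Set.range xyExp → f.coeff γ = g.coeff γ) : f = g := by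
  ext γ
  by_cases h : γ ∈ Set.range xyExp
  · obtain ⟨d, rfl⟩ := h
    exact h1 d
  · exact h2 γ h

/-- The inclusion of the ring of power series in two variables. -/
def emb : MvPowerSeries (Fin 2) R →+* LaurentXY R where
  toFun := embFun
  map_one' := by
    classical
    refine embFun_ext (fun d => ?_) fun γ h => ?_
    · rw [embFun_coeff, MvPowerSeries.coeff_one, coeff_one]
      simp only [map_eq_zero_iff xyExp xyExp_injective]
    · rw [embFun_coeff_of_notMem _ h, coeff_one, if_neg]
      rintro rfl
      exact h ⟨0, map_zero _⟩
  map_zero' := embFun_ext (fun d => by rw [embFun_coeff]; simp)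
    fun γ h => by rw [embFun_coeff_of_notMem _ h]; simp
  map_add' f g := embFun_ext (fun d => by simp only [coeff_add, embFun_coeff, map_add])
    fun γ h => by simp only [coeff_add, embFun_coeff_of_notMem _ h, add_zero]
  map_mul' f g := by
    classical
    refine embFun_ext (fun d => ?_) fun γ h => ?_
    · rw [embFun_coeff, hahn_coeff_mul, MvPowerSeries.coeff_mul]
      rw [finsum_eq_comp_of_injective xyExp_injective
        (fun γ h => by rw [embFun_coeff_of_notMem _ h, zero_mul])]
      rw [finsum_eq_sum_of_support_subset (s := (Finset.HasAntidiagonal.antidiagonal d).image Prod.fst)]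
      · rw [Finset.sum_image]
        · refine Finset.sum_congr rfl fun p hp => ?_
          rw [Finset.HasAntidiagonal.mem_antidiagonal] at hp
          rw [← hp, map_add, add_sub_cancel_left, embFun_coeff, embFun_coeff]
        · intro p hp q hq h
          simp only [Finset.mem_coe, Finset.HasAntidiagonal.mem_antidiagonal] at hp hq
          exact Prod.ext h (add_left_cancel (a := p.1) (by rw [hp, h, hq]))
      · intro e he
        have h2 := right_ne_zero_of_mul he
        have : xyExp d - xyExp e ∈ Set.range xyExp := by
          by_contra h
          exact h2 (embFun_coeff_of_notMem _ h)
        obtain ⟨e', h'⟩ := this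
        simp only [Finset.coe_image, Set.mem_image, Finset.mem_coe, Finset.HasAntidiagonal.mem_antidiagonal]
        refine ⟨(e, e'), xyExp_injective ?_, rfl⟩
        rw [map_add, h', add_sub_cancel]
    · rw [embFun_coeff_of_notMem _ h, hahn_coeff_mul]
      symm
      refine (finsum_congr fun δ => ?_).trans finsum_zero
      by_cases h1 : δ ∈ Set.range xyExp
      · rw [embFun_coeff_of_notMem g, mul_zero]
        rintro ⟨e, he⟩
        obtain ⟨e', rfl⟩ := h1
        exact h ⟨e' + e, by rw [map_add, he, add_sub_cancel]⟩
      · rw [embFun_coeff_of_notMem f h1, zero_mul]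

theorem emb_coeff (f : MvPowerSeries (Fin 2) R) (d : Fin 2 →₀ ℕ) :
    (emb f).coeff (xyExp d) = MvPowerSeries.coeff d f := embFun_coeff f d

theorem emb_coeff_of_notMem (f : MvPowerSeries (Fin 2) R) {γ : ℤ ×ₗ ℤ}
    (h : γ ∉ Set.range xyExp) : (emb f).coeff γ = 0 := embFun_coeff_of_notMem f h

theorem co_emb (f : MvPowerSeries (Fin 2) R) (i j : ℤ) :
    co (emb f) i j = if 0 ≤ i ∧ 0 ≤ j then
      MvPowerSeries.coeff (Finsupp.equivFunOnFinite.symm ![i.toNat, j.toNat]) f else 0 := rfl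

theorem emb_monomial (d : Fin 2 →₀ ℕ) (r : R) :
    emb (MvPowerSeries.monomial d r) = single (xyExp d) r := by
  classical
  refine embFun_ext (fun e => ?_) fun γ h => ?_
  · rw [emb_coeff, MvPowerSeries.coeff_monomial, coeff_single]
    simp only [xyExp_injective.eq_iff]
  · rw [emb_coeff_of_notMem _ h, coeff_single_of_ne]
    rintro rfl
    exact h ⟨d, rfl⟩

theorem emb_X0 : emb (MvPowerSeries.X 0 : MvPowerSeries (Fin 2) R) = mono 1 0 1 := by
  rw [MvPowerSeries.X, emb_monomial, mono, xyExp_apply]; simp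

theorem emb_X1 : emb (MvPowerSeries.X 1 : MvPowerSeries (Fin 2) R) = mono 0 1 1 := by
  rw [MvPowerSeries.X, emb_monomial, mono, xyExp_apply]; simp

end TwoVariables

noncomputable section Substitutions

open HahnSeries
open scoped Pointwise

section General

variable {Γ R : Type*} [AddCommGroup Γ] [LinearOrder Γ] [IsOrderedAddMonoid Γ] [CommRing R]

theorem orderTop_pos_of_coeff_eq_zero {Γ : Type*} [AddCommGroup Γ] [LinearOrder Γ]
    {h : HahnSeries Γ R} (H : ∀ γ ≤ 0, h.coeff γ = 0) :
    0 < h.orderTop := by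
  by_contra! hle
  obtain ⟨g, hg⟩ := WithTop.ne_top_iff_exists.1 (hle.trans_lt (WithTop.coe_lt_top (0 : Γ))).ne
  rw [← hg] at hle
  exact coeff_orderTop_ne hg.symm (H g (by exact_mod_cast hle))

theorem pow_support_subset_closure (h : HahnSeries Γ R) (k : ℕ) {γ : Γ}
    (hγ : (h ^ k).coeff γ ≠ 0) : γ ∈ AddSubmonoid.closure h.support := by
  induction k generalizing γ with
  | zero =>
    rw [pow_zero, coeff_one] at hγ
    have : γ = 0 := by by_contra h; simp [h] at hγ
    rw [this]; exact zero_mem _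
  | succ k ih =>
    rw [pow_succ] at hγ
    obtain ⟨a, ha, b, hb, rfl⟩ := support_mul_subset (Function.mem_support.2 hγ)
    exact add_mem (ih ha) (AddSubmonoid.subset_closure hb)

theorem coeff_oneAddUnit_zpow (h : HahnSeries Γ R) (hh : 0 < h.orderTop) (n : ℤ) (γ : Γ) :
    (↑(oneAddUnit h hh ^ n) : HahnSeries Γ R).coeff γ =
      ∑ᶠ k : ℕ, ((Ring.choose n k : ℤ) : R) * (h ^ k).coeff γ := by
  have := coeff_heval_mul hh (PowerSeries.binomialSeries R n) 1 γ
  rw [mul_one] at this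
  rw [oneAddUnit_zpow, this]
  refine finsum_congr fun k => ?_
  rw [mul_one, PowerSeries.binomialSeries_coeff, zsmul_one]

theorem zpow_support_subset_closure (h : HahnSeries Γ R) (hh : 0 < h.orderTop) (n : ℤ) {γ : Γ}
    (hγ : (↑(oneAddUnit h hh ^ n) : HahnSeries Γ R).coeff γ ≠ 0) :
    γ ∈ AddSubmonoid.closure h.support := by
  rw [coeff_oneAddUnit_zpow] at hγ
  obtain ⟨k, hk⟩ : ∃ k : ℕ, ((Ring.choose n k : ℤ) : R) * (h ^ k).coeff γ ≠ 0 := by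
    by_contra! h0
    exact hγ ((finsum_congr h0).trans finsum_zero)
  exact pow_support_subset_closure h k (right_ne_zero_of_mul hk)

theorem isPWO_closure_support (h : HahnSeries Γ R) (hh : 0 < h.orderTop) :
    (AddSubmonoid.closure h.support : Set Γ).IsPWO := by
  refine h.isPWO_support.addSubmonoid_closure fun γ hγ => ?_
  by_contra! hlt
  exact hγ (coeff_eq_zero_of_lt_orderTop (lt_trans (by exact_mod_cast hlt) hh))

/-- A monomial as a unit. -/
def monoUnit (γ : Γ) (c : Rˣ) : (HahnSeries Γ R)ˣ where
  val := single γ c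
  inv := single (-γ) ↑c⁻¹
  val_inv := by rw [single_mul_single]; simp
  inv_val := by rw [single_mul_single]; simp

theorem monoUnit_val (γ : Γ) (c : Rˣ) : (monoUnit γ c : HahnSeries Γ R) = single γ (c : R) := rfl

theorem monoUnit_mul (γ δ : Γ) (c d : Rˣ) :
    monoUnit γ c * monoUnit δ d = monoUnit (γ + δ) (c * d) :=
  Units.ext (by simp [monoUnit_val])

theorem monoUnit_inv (γ : Γ) (c : Rˣ) : (monoUnit γ c)⁻¹ = monoUnit (-γ) c⁻¹ := Units.ext rfl

theorem monoUnit_zpow (γ : Γ) (c : Rˣ) (n : ℤ) : monoUnit γ c ^ n = monoUnit (n • γ) (c ^ n) := by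
  induction n with
  | zero => exact Units.ext (by simp [monoUnit_val])
  | succ n ih => rw [zpow_add_one, ih, monoUnit_mul, add_smul, one_smul, zpow_add_one]
  | pred n ih =>
    rw [zpow_sub_one, ih, monoUnit_inv, monoUnit_mul, sub_smul, one_smul, zpow_sub_one,
      sub_eq_add_neg]

/-- A series with invertible leading coefficient. -/
structure LeadUnit (Γ R : Type*) [AddCommGroup Γ] [LinearOrder Γ] [IsOrderedAddMonoid Γ]
    [CommRing R] where
  exp : Γ
  c : Rˣ
  h : HahnSeries Γ R
  pos : 0 < h.orderTop

/-- The unit of the ring of Hahn series. -/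
def LeadUnit.unit (A : LeadUnit Γ R) : (HahnSeries Γ R)ˣ :=
  monoUnit A.exp A.c * oneAddUnit A.h A.pos

theorem LeadUnit.unit_val (A : LeadUnit Γ R) :
    (A.unit : HahnSeries Γ R) = single A.exp (A.c : R) * (1 + A.h) := rfl

theorem LeadUnit.unit_zpow (A : LeadUnit Γ R) (n : ℤ) :
    (↑(A.unit ^ n) : HahnSeries Γ R) = single (n • A.exp) ((↑(A.c ^ n) : R)) *
      (↑(oneAddUnit A.h A.pos ^ n) : HahnSeries Γ R) := by
  rw [unit, mul_zpow, Units.val_mul, monoUnit_zpow, monoUnit_val]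

end General

variable {R : Type*} [CommRing R]

theorem xy_smul (n i j : ℤ) : n • xy i j = xy (n * i) (n * j) := by
  have h1 : degX (n • xy i j) = n * i := by rw [map_zsmul, degX_xy, smul_eq_mul]
  have h2 : degY (n • xy i j) = n * j := by rw [map_zsmul, degY_xy, smul_eq_mul]
  rw [← h1, ← h2]; rfl

/-- The substitution of series with leading terms `c x`, `d y` for `x`, `y`. -/
def pairSubst (A B : LeadUnit (ℤ ×ₗ ℤ) R) (hA : A.exp = xy 1 0) (hB : B.exp = xy 0 1) :
    MonomialSubst (ℤ ×ₗ ℤ) R where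
  u :=
    { toFun := fun γ => ↑(A.unit ^ degX γ.toAdd * B.unit ^ degY γ.toAdd)
      map_one' := by simp
      map_mul' := fun γ δ => by
        rw [← Units.val_mul, toAdd_mul, map_add, map_add, zpow_add, zpow_add]
        congr 1
        exact mul_mul_mul_comm _ _ _ _ }
  dom := (AddSubmonoid.closure A.h.support : Set (ℤ ×ₗ ℤ)) +
    (AddSubmonoid.closure B.h.support : Set (ℤ ×ₗ ℤ))
  pwo := (isPWO_closure_support A.h A.pos).add (isPWO_closure_support B.h B.pos)
  sub γ δ hγ := by
    have h1 : (↑(A.unit ^ degX γ * B.unit ^ degY γ) : LaurentXY R) =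
        single γ (↑(A.c ^ degX γ) * (↑(B.c ^ degY γ)) : R) *
          ((↑(oneAddUnit A.h A.pos ^ degX γ) : LaurentXY R) *
          (↑(oneAddUnit B.h B.pos ^ degY γ) : LaurentXY R)) := by
      have h2 : γ = degX γ • A.exp + degY γ • B.exp := by
        obtain ⟨i, j, rfl⟩ := xy_surj γ
        rw [hA, hB, degX_xy, degY_xy]
        rw [xy_smul, xy_smul, xy_add]
        simp
      rw [Units.val_mul, A.unit_zpow, B.unit_zpow, mul_mul_mul_comm, single_mul_single, ← h2]
    change (↑(A.unit ^ degX γ * B.unit ^ degY γ) : LaurentXY R).coeff δ ≠ 0 at hγ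
    have h3 : δ = (δ - γ) + γ := by simp
    rw [h1, h3, coeff_single_mul_add] at hγ
    obtain ⟨a, ha, b, hb, h4⟩ := support_mul_subset
      (Function.mem_support.2 (right_ne_zero_of_mul hγ))
    exact ⟨a, zpow_support_subset_closure _ _ _ ha, b, zpow_support_subset_closure _ _ _ hb, h4⟩

/-- Data for a substitution `x ↦ a`, `y ↦ b` of power series on `R((x))((y))`. -/
structure SubData (R : Type*) [CommRing R] where
  a : MvPowerSeries (Fin 2) R
  b : MvPowerSeries (Fin 2) R
  c : Rˣ
  d : Rˣ
  ha0 : co (emb a) 0 0 = 0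
  ha1 : co (emb a) 1 0 = c
  hb0 : ∀ i, co (emb b) i 0 = 0
  hb1 : co (emb b) 0 1 = d

namespace SubData

variable (s : SubData R)

/-- The leading term of `a`. -/
def leadA : LeadUnit (ℤ ×ₗ ℤ) R where
  exp := xy 1 0
  c := s.c
  h := mono (-1) 0 (↑s.c⁻¹ : R) * emb s.a - 1
  pos := by
    refine orderTop_pos_of_coeff_eq_zero fun γ hγ => ?_
    obtain ⟨i, j, rfl⟩ := xy_surj γ
    change co _ i j = 0
    rw [← xy_zero, xy_le] at hγ
    rw [co_sub, co_mono_mul, co_one, oneS2]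
    by_cases h0 : i = 0 ∧ j = 0
    · rw [if_pos h0, h0.1, h0.2]
      simp [s.ha1]
    · rw [if_neg h0]
      by_cases h1 : i = -1 ∧ j = 0
      · rw [h1.1, h1.2]
        simp [s.ha0]
      · rw [co_emb, if_neg (by omega)]; simp

/-- The leading term of `b`. -/
def leadB : LeadUnit (ℤ ×ₗ ℤ) R where
  exp := xy 0 1
  c := s.d
  h := mono 0 (-1) (↑s.d⁻¹ : R) * emb s.b - 1
  pos := by
    refine orderTop_pos_of_coeff_eq_zero fun γ hγ => ?_
    obtain ⟨i, j, rfl⟩ := xy_surj γ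
    change co _ i j = 0
    rw [← xy_zero, xy_le] at hγ
    rw [co_sub, co_mono_mul, co_one, oneS2]
    by_cases h0 : i = 0 ∧ j = 0
    · rw [if_pos h0, h0.1, h0.2]
      simp [s.hb1]
    · rw [if_neg h0]
      by_cases h1 : j = -1
      · rw [h1]
        simp [s.hb0]
      · rw [co_emb, if_neg (by omega)]; simp

/-- `a` as a unit of `R((x))((y))`. -/
def A : (LaurentXY R)ˣ := s.leadA.unit

/-- `b` as a unit of `R((x))((y))`. -/
def B : (LaurentXY R)ˣ := s.leadB.unit

theorem A_val : (s.A : LaurentXY R) = emb s.a := by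
  change mono 1 0 (s.c : R) * (1 + (mono (-1) 0 (↑s.c⁻¹ : R) * emb s.a - 1)) = _
  rw [add_sub_cancel, ← mul_assoc, mono_mul]
  simp [mono_zero_one]

theorem B_val : (s.B : LaurentXY R) = emb s.b := by
  change mono 0 1 (s.d : R) * (1 + (mono 0 (-1) (↑s.d⁻¹ : R) * emb s.b - 1)) = _
  rw [add_sub_cancel, ← mul_assoc, mono_mul]
  simp [mono_zero_one]

/-- The substitution as a ring endomorphism of `R((x))((y))`. -/
def mon : MonomialSubst (ℤ ×ₗ ℤ) R := pairSubst s.leadA s.leadB rfl rfl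

theorem img_xy (i j : ℤ) :
    s.mon.img (xy i j) = (↑(s.A ^ i) : LaurentXY R) * (↑(s.B ^ j) : LaurentXY R) := rfl

theorem hom_mono (i j : ℤ) (r : R) :
    s.mon.hom (mono i j r) = mono 0 0 r * ((↑(s.A ^ i) : LaurentXY R) * (↑(s.B ^ j) : LaurentXY R)) := by
  change s.mon.ap (single (xy i j) r) = _
  rw [s.mon.ap_single, img_xy, ← single_zero_mul_eq_smul]; rfl

theorem constantCoeff_a : MvPowerSeries.constantCoeff s.a = 0 := by
  rw [← MvPowerSeries.coeff_zero_eq_constantCoeff_apply, ← emb_coeff]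
  exact s.ha0

theorem constantCoeff_b : MvPowerSeries.constantCoeff s.b = 0 := by
  rw [← MvPowerSeries.coeff_zero_eq_constantCoeff_apply, ← emb_coeff]
  exact s.hb0 0

theorem hasSubst : MvPowerSeries.HasSubst ![s.a, s.b] := by
  refine MvPowerSeries.hasSubst_of_constantCoeff_zero fun i => ?_
  fin_cases i
  · exact s.constantCoeff_a
  · exact s.constantCoeff_b

theorem hom_emb (f : MvPowerSeries (Fin 2) R) :
    s.mon.hom (emb f) = emb (MvPowerSeries.subst ![s.a, s.b] f) := by
  have key : ∀ γ, (s.mon.ap (emb f)).coeff γ = ∑ᶠ d : Fin 2 →₀ ℕ,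
      MvPowerSeries.coeff d f * (emb (s.a ^ d 0 * s.b ^ d 1)).coeff γ := by
    intro γ
    rw [s.mon.coeff_ap, finsum_eq_comp_of_injective xyExp_injective
        (fun γ h => by rw [emb_coeff_of_notMem _ h, zero_mul])]
    refine finsum_congr fun d => ?_
    rw [emb_coeff, xyExp_apply, img_xy, zpow_natCast, zpow_natCast, Units.val_pow_eq_pow_val,
      Units.val_pow_eq_pow_val, A_val, B_val, map_mul, map_pow, map_pow]
  change s.mon.ap (emb f) = _
  refine embFun_ext (fun e => ?_) fun γ h => ?_
  · rw [key, emb_coeff, MvPowerSeries.coeff_subst s.hasSubst]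
    refine finsum_congr fun d => ?_
    rw [emb_coeff, Finsupp.prod_fintype _ _ (fun _ => pow_zero _), Fin.prod_univ_two]
    rfl
  · rw [key, emb_coeff_of_notMem _ h]
    simp only [emb_coeff_of_notMem _ h, mul_zero, finsum_zero]

/-- The chain rule. -/
theorem euler_hom (φ : ℤ ×ₗ ℤ →+ ℤ) (f : LaurentXY R) :
    euler φ (s.mon.hom f) =
      s.mon.hom (euler degX f) * ((↑s.A⁻¹ : LaurentXY R) * euler φ (emb s.a)) +
      s.mon.hom (euler degY f) * ((↑s.B⁻¹ : LaurentXY R) * euler φ (emb s.b)) := by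
  refine s.mon.euler_ap φ degX degY _ _ (fun γ => ?_) f
  obtain ⟨i, j, rfl⟩ := xy_surj γ
  rw [img_xy, euler_mul, euler_zpow, euler_zpow, A_val, B_val, degX_xy, degY_xy]
  ring

end SubData

end Substitutions

noncomputable section FormalGroupSeries

open HahnSeries

section SubstLemmas

variable {R : Type*} [CommRing R] {σ τ : Type*}

theorem subst_pair_subst {a₁ a₂ : MvPowerSeries σ R} {b : σ → MvPowerSeries τ R}
    (ha : MvPowerSeries.HasSubst ![a₁, a₂]) (hb : MvPowerSeries.HasSubst b)
    (f : MvPowerSeries (Fin 2) R) :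
    MvPowerSeries.subst b (MvPowerSeries.subst ![a₁, a₂] f) =
      MvPowerSeries.subst ![MvPowerSeries.subst b a₁, MvPowerSeries.subst b a₂] f := by
  rw [MvPowerSeries.subst_comp_subst_apply ha hb]
  congr 1
  funext i
  fin_cases i <;> rfl

theorem subst_power_subst {a : MvPowerSeries σ R} {b : σ → MvPowerSeries τ R}
    (ha : PowerSeries.HasSubst a) (hb : MvPowerSeries.HasSubst b) (f : PowerSeries R) :
    MvPowerSeries.subst b (PowerSeries.subst a f) =
      PowerSeries.subst (MvPowerSeries.subst b a) f := by
  rw [PowerSeries.subst_def, MvPowerSeries.subst_comp_subst_apply ha.const hb]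
  rfl

theorem hasSubst_pair {a b : MvPowerSeries τ R} (ha : PowerSeries.HasSubst a)
    (hb : PowerSeries.HasSubst b) : MvPowerSeries.HasSubst ![a, b] :=
  MvPowerSeries.hasSubst_of_constantCoeff_nilpotent fun i => by
    fin_cases i
    · exact ha
    · exact hb

/-- The exponent with two prescribed values. -/
def exp2 (m n : ℕ) : Fin 2 →₀ ℕ := Finsupp.single 0 m + Finsupp.single 1 n

theorem exp2_zero (m n : ℕ) : exp2 m n 0 = m := by simp [exp2]

theorem exp2_one (m n : ℕ) : exp2 m n 1 = n := by simp [exp2]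

theorem exp2_eta (d : Fin 2 →₀ ℕ) : exp2 (d 0) (d 1) = d := by
  ext i; fin_cases i
  · exact exp2_zero _ _
  · exact exp2_one _ _

theorem co_emb_natCast (f : MvPowerSeries (Fin 2) R) (m n : ℕ) :
    co (emb f) m n = MvPowerSeries.coeff (exp2 m n) f := by
  rw [← emb_coeff, xyExp_apply, exp2_zero, exp2_one, co]

theorem coeff_subst_X_pair_mul_X_pow {i j k : Fin 3} (hij : i ≠ j) (hik : i ≠ k) (hjk : j ≠ k)
    (g : MvPowerSeries (Fin 2) R) (n : ℕ) (e : Fin 3 →₀ ℕ) :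
    MvPowerSeries.coeff e (MvPowerSeries.subst
      ![(MvPowerSeries.X i : MvPowerSeries (Fin 3) R), MvPowerSeries.X j] g *
        MvPowerSeries.X k ^ n) =
      if e k = n then MvPowerSeries.coeff (exp2 (e i) (e j)) g else 0 := by
  classical
  have hmon : ∀ d : Fin 2 →₀ ℕ, (d.prod fun s e =>
      ![(MvPowerSeries.X i : MvPowerSeries (Fin 3) R), MvPowerSeries.X j] s ^ e) =
      MvPowerSeries.monomial (Finsupp.single i (d 0) + Finsupp.single j (d 1)) 1 := by
    intro d
    rw [Finsupp.prod_fintype _ _ (fun _ => pow_zero _), Fin.prod_univ_two]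
    simp [MvPowerSeries.X_pow_eq, MvPowerSeries.monomial_mul_monomial]
  have hcover : ∀ l : Fin 3, l = i ∨ l = j ∨ l = k := by omega
  rw [MvPowerSeries.X_pow_eq, MvPowerSeries.coeff_mul_monomial, mul_one,
    MvPowerSeries.coeff_subst MvPowerSeries.HasSubst.X_X]
  simp only [hmon, MvPowerSeries.coeff_monomial]
  by_cases hn : n ≤ e k
  · rw [if_pos (by simpa using hn)]
    split_ifs with h
    · rw [finsum_eq_single _ (exp2 (e i) (e j))]
      · rw [if_pos, smul_eq_mul, mul_one]
        ext l
        rcases hcover l with rfl | rfl | rfl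
        · simp [exp2, hij, hik]
        · simp [exp2, hij.symm, hjk]
        · simp [h, hik.symm, hjk.symm]
      · intro d hd
        rw [if_neg, smul_zero]
        intro h0
        refine hd ?_
        have h1 := DFunLike.congr_fun h0 i
        have h2 := DFunLike.congr_fun h0 j
        simp [hij, hij.symm, hik, hjk] at h1 h2
        rw [h1, h2, exp2_eta]
    · refine (finsum_congr fun d => ?_).trans finsum_zero
      rw [if_neg, smul_zero]
      intro h0
      have h1 := DFunLike.congr_fun h0 k
      simp [hik.symm, hjk.symm] at h1
      omega
  · rw [if_neg (by simpa using hn), if_neg (by omega)]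

end SubstLemmas

namespace FormalGroupLaw

variable {R : Type*} [CommRing R] (𝓕 : FormalGroupLaw R)

/-- The formal group law as a power series. -/
def ser : MvPowerSeries (Fin 2) R := fun d => 𝓕.F (d 0) (d 1)

theorem coeff_ser (d : Fin 2 →₀ ℕ) : MvPowerSeries.coeff d 𝓕.ser = 𝓕.F (d 0) (d 1) := rfl

theorem co_ser : co (emb 𝓕.ser) = 𝓕.F := by
  funext i j
  rw [co_emb]
  split_ifs with h
  · rw [coeff_ser]
    simp [h.1, h.2]
  · rw [𝓕.F_supp _ _ (by omega)]

theorem pow2_F (m : ℕ) (i j : ℤ) : pow2 𝓕.F m i j = co (emb (𝓕.ser ^ m)) i j := by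
  rw [map_pow, co_pow, co_ser]

theorem coeff_ser_pow (m : ℕ) (d : Fin 2 →₀ ℕ) :
    MvPowerSeries.coeff d (𝓕.ser ^ m) = pow2 𝓕.F m (d 0) (d 1) := by
  rw [pow2_F, ← emb_coeff, xyExp_apply, co]

theorem constantCoeff_ser : MvPowerSeries.constantCoeff 𝓕.ser = 0 := by
  rw [← MvPowerSeries.coeff_zero_eq_constantCoeff_apply, coeff_ser]
  simpa using 𝓕.F_modw 0

theorem coeff_ser_subst_left {i j k : Fin 3} (hij : i ≠ j) (hik : i ≠ k) (hjk : j ≠ k)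
    (e : Fin 3 →₀ ℕ) :
    MvPowerSeries.coeff e (MvPowerSeries.subst
      ![MvPowerSeries.subst ![(MvPowerSeries.X i : MvPowerSeries (Fin 3) R), MvPowerSeries.X j] 𝓕.ser,
        MvPowerSeries.X k] 𝓕.ser) =
      ∑ᶠ m : ℕ, 𝓕.F (m : ℤ) (e k) * pow2 𝓕.F m (e i) (e j) := by
  rw [MvPowerSeries.coeff_subst
    (MvPowerSeries.HasSubst.cons_subst_zero_left i j k 𝓕.constantCoeff_ser)]
  have : Function.Injective fun m : ℕ => exp2 m (e k) := by
    intro m n h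
    simpa [exp2_zero] using DFunLike.congr_fun h 0
  have key : ∀ d : Fin 2 →₀ ℕ, MvPowerSeries.coeff e (d.prod fun s e =>
      ![MvPowerSeries.subst ![(MvPowerSeries.X i : MvPowerSeries (Fin 3) R), MvPowerSeries.X j] 𝓕.ser,
        MvPowerSeries.X k] s ^ e) =
      if e k = d 1 then pow2 𝓕.F (d 0) (e i) (e j) else 0 := by
    intro d
    rw [Finsupp.prod_fintype _ _ (fun _ => pow_zero _), Fin.prod_univ_two]
    change MvPowerSeries.coeff e ((MvPowerSeries.subst _ _) ^ _ * MvPowerSeries.X k ^ _) = _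
    rw [← MvPowerSeries.subst_pow MvPowerSeries.HasSubst.X_X,
      coeff_subst_X_pair_mul_X_pow hij hik hjk, coeff_ser_pow, exp2_zero, exp2_one]
  simp only [key]
  rw [finsum_eq_comp_of_injective this]
  · refine finsum_congr fun m => ?_
    rw [exp2_one, exp2_zero, if_pos rfl, coeff_ser, exp2_one, exp2_zero, smul_eq_mul]
  · intro d hd
    rw [if_neg, smul_zero]
    intro h
    exact hd ⟨d 0, by rw [h]; exact exp2_eta d⟩

theorem ser_subst_swap {σ : Type*} {a b : MvPowerSeries σ R} (ha : PowerSeries.HasSubst a)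
    (hb : PowerSeries.HasSubst b) :
    MvPowerSeries.subst ![a, b] 𝓕.ser = MvPowerSeries.subst ![b, a] 𝓕.ser := by
  ext e
  rw [MvPowerSeries.coeff_subst (hasSubst_pair ha hb), MvPowerSeries.coeff_subst (hasSubst_pair hb ha)]
  refine finsum_eq_of_bijective (fun d => exp2 (d 1) (d 0))
    (Function.Involutive.bijective fun d => by
      simp only [exp2_zero, exp2_one, exp2_eta]) fun d => ?_
  rw [Finsupp.prod_fintype _ _ (fun _ => pow_zero _), Fin.prod_univ_two,
    Finsupp.prod_fintype _ _ (fun _ => pow_zero _), Fin.prod_univ_two, coeff_ser, coeff_ser,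
    exp2_zero, exp2_one, 𝓕.F_comm, mul_comm]
  rfl

/-- The formal group law in Mathlib's sense. -/
def toFormalGroup : FormalGroup R where
  toPowerSeries := 𝓕.ser
  zero_constantCoeff := 𝓕.constantCoeff_ser
  lin_coeff_X := by rw [coeff_ser]; simp [𝓕.F_modw]
  lin_coeff_Y := by rw [coeff_ser, 𝓕.F_comm]; simp [𝓕.F_modw]
  assoc := by
    ext e
    rw [𝓕.ser_subst_swap (PowerSeries.HasSubst.X (0 : Fin 3))
      (PowerSeries.HasSubst.of_constantCoeff_zero (MvPowerSeries.constantCoeff_subst_eq_zero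
        MvPowerSeries.HasSubst.X_X (fun i => by fin_cases i <;> simp) 𝓕.constantCoeff_ser)),
      coeff_ser_subst_left 𝓕 (by decide) (by decide) (by decide),
      coeff_ser_subst_left 𝓕 (by decide) (by decide) (by decide), 𝓕.F_assoc]
    exact finsum_congr fun n => by rw [𝓕.F_comm]

end FormalGroupLaw

end FormalGroupSeries

noncomputable section OneVariable

open HahnSeries

theorem ringChoose_eq_zbinom (n : ℤ) (k : ℕ) : Ring.choose n k = zbinom n k := by
  rw [zbinom]
  split_ifs with h
  · obtain ⟨m, rfl⟩ := Int.eq_ofNat_of_zero_le h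
    rw [Int.toNat_natCast]
    exact Ring.choose_natCast m k
  · have h1 := Ring.choose_neg (-n) k
    rw [neg_neg] at h1
    rw [h1, show -n + (k : ℤ) - 1 = (((k : ℤ) - n - 1).toNat : ℕ) by omega]
    have h2 := Ring.choose_natCast (R := ℤ) (((k : ℤ) - n - 1).toNat) k
    rw [h2, Units.smul_def, smul_eq_mul, Int.negOnePow_def]
    simp

theorem zbinom_neg_one (k : ℕ) : zbinom (-1) k = (-1) ^ k := by
  rw [zbinom, if_neg (by omega)]
  simp

theorem neg_one_zpow_eq_msign (R : Type*) [CommRing R] (n : ℤ) :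
    (((-1 : Rˣ) ^ n : Rˣ) : R) = (msign n : R) := by
  rw [msign]
  split_ifs with h
  · rw [h.neg_one_zpow]; simp
  · rw [(Int.not_even_iff_odd.mp h).neg_one_zpow]; simp

section

variable {R : Type*} [CommRing R]

theorem subst_X0_X1 (f : MvPowerSeries (Fin 2) R) :
    MvPowerSeries.subst ![(MvPowerSeries.X 0 : MvPowerSeries (Fin 2) R), MvPowerSeries.X 1] f = f := by
  rw [show ![(MvPowerSeries.X 0 : MvPowerSeries (Fin 2) R), MvPowerSeries.X 1] = MvPowerSeries.X by
    funext i; fin_cases i <;> rfl, MvPowerSeries.subst_self, id]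

/-- Laurent series in `x` alone. -/
def inX : HahnSeries ℤ R →+* LaurentXY R :=
  embDomainRingHom ⟨⟨fun n => xy n 0, rfl⟩, fun _ _ => rfl⟩
    (fun _ _ h => (xy_inj.mp h).1) (fun m n => by
      change xy m 0 ≤ xy n 0 ↔ _
      rw [xy_le]; omega)

/-- Laurent series in `y` alone. -/
def inY : HahnSeries ℤ R →+* LaurentXY R :=
  embDomainRingHom ⟨⟨fun n => xy 0 n, rfl⟩, fun _ _ => rfl⟩
    (fun _ _ h => (xy_inj.mp h).2) (fun m n => by
      change xy 0 m ≤ xy 0 n ↔ _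
      rw [xy_le]; omega)

theorem co_inX (f : HahnSeries ℤ R) (i j : ℤ) :
    co (inX f) i j = if j = 0 then f.coeff i else 0 := by
  split_ifs with h
  · subst h
    exact embDomain_coeff (f := ⟨⟨fun n : ℤ => xy n 0, _⟩, _⟩)
  · refine embDomain_of_notMem_range fun ⟨n, hn⟩ => h ?_
    exact (xy_inj.mp (show xy n 0 = xy i j from hn)).2.symm

theorem co_inY (f : HahnSeries ℤ R) (i j : ℤ) :
    co (inY f) i j = if i = 0 then f.coeff j else 0 := by
  split_ifs with h
  · subst h
    exact embDomain_coeff (f := ⟨⟨fun n : ℤ => xy 0 n, _⟩, _⟩)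
  · refine embDomain_of_notMem_range fun ⟨n, hn⟩ => h ?_
    exact (xy_inj.mp (show xy 0 n = xy i j from hn)).1.symm

theorem emb_subst_X0 (f : PowerSeries R) :
    emb (f.subst (MvPowerSeries.X 0 : MvPowerSeries (Fin 2) R)) = inX (ofPowerSeries ℤ R f) := by
  refine co_ext fun i j => ?_
  rw [co_emb, co_inX, PowerSeries.coeff_coe]
  simp only [PowerSeries.coeff_subst_single]
  by_cases hj : j = 0
  · subst hj
    by_cases hi : 0 ≤ i
    · rw [if_pos ⟨hi, le_rfl⟩, if_pos, if_pos rfl, if_neg (by omega)]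
      · rw [show i.natAbs = i.toNat by omega]; rfl
      · ext l; fin_cases l <;> simp
    · rw [if_neg (by omega), if_pos rfl, if_pos (by omega)]
  · rw [if_neg hj]
    split_ifs with h1 h2
    · have := DFunLike.congr_fun h2 1
      simp at this
      omega
    · rfl
    · rfl

theorem emb_subst_X1 (f : PowerSeries R) :
    emb (f.subst (MvPowerSeries.X 1 : MvPowerSeries (Fin 2) R)) = inY (ofPowerSeries ℤ R f) := by
  refine co_ext fun i j => ?_
  rw [co_emb, co_inY, PowerSeries.coeff_coe]
  simp only [PowerSeries.coeff_subst_single]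
  by_cases hj : i = 0
  · subst hj
    by_cases hi : 0 ≤ j
    · rw [if_pos ⟨le_rfl, hi⟩, if_pos, if_pos rfl, if_neg (by omega)]
      · rw [show j.natAbs = j.toNat by omega]; rfl
      · ext l; fin_cases l <;> simp
    · rw [if_neg (by omega), if_pos rfl, if_pos (by omega)]
  · rw [if_neg hj]
    split_ifs with h1 h2
    · have := DFunLike.congr_fun h2 0
      simp at this
      omega
    · rfl
    · rfl

theorem coeff_pow_eq_pow1 (f : HahnSeries ℤ R) (k : ℕ) : (f ^ k).coeff = pow1 f.coeff k := by
  induction k with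
  | zero =>
    funext n
    simp only [pow_zero, pow1, oneS, coeff_one]
    congr
  | succ k ih =>
    funext n
    rw [pow_succ', hahn_coeff_mul, pow1, mulS, ih]
    rfl

end

namespace FormalGroupLaw

variable {R : Type*} [CommRing R] (𝓕 : FormalGroupLaw R)

/-- The formal inverse as a power series. -/
def iota : PowerSeries R := PowerSeries.mk fun n => 𝓕.inv n

theorem coeff_coe_iota : (ofPowerSeries ℤ R 𝓕.iota).coeff = 𝓕.inv := by
  funext n
  rw [PowerSeries.coeff_coe]
  split_ifs with h
  · rw [𝓕.inv_supp _ (by omega)]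
  · rw [iota, PowerSeries.coeff_mk, Int.natAbs_of_nonneg (by omega)]

/-- The inverse of the invariant differential. -/
def q : PowerSeries R := PowerSeries.mk fun n => 𝓕.F n 1

theorem constantCoeff_q : PowerSeries.constantCoeff 𝓕.q = 1 := by
  rw [← PowerSeries.coeff_zero_eq_constantCoeff_apply, q, PowerSeries.coeff_mk, 𝓕.F_comm]
  simp [𝓕.F_modw]

/-- The invariant differential. -/
def p : PowerSeries R := PowerSeries.invOfUnit 𝓕.q 1

theorem q_mul_p : 𝓕.q * 𝓕.p = 1 :=
  PowerSeries.mul_invOfUnit _ _ 𝓕.constantCoeff_q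

theorem coeff_coe_q : (ofPowerSeries ℤ R 𝓕.q).coeff = fun n => 𝓕.F n 1 := by
  funext n
  rw [PowerSeries.coeff_coe]
  split_ifs with h
  · rw [𝓕.F_supp _ _ (by omega)]
  · rw [q, PowerSeries.coeff_mk, Int.natAbs_of_nonneg (by omega)]

theorem coeff_coe_p : (ofPowerSeries ℤ R 𝓕.p).coeff = 𝓕.pF := by
  set h : HahnSeries ℤ R := ofPowerSeries ℤ R 𝓕.q - 1 with hdef
  have hc : h.coeff = hOneS fun n => 𝓕.F n 1 := by
    funext n
    simp only [hdef, coeff_sub, coeff_coe_q, coeff_one, hOneS, oneS]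
    congr
  have hpos : 0 < h.orderTop := orderTop_pos_of_coeff_eq_zero fun n hn => by
    rw [hc, hOneS, oneS]
    rcases hn.lt_or_eq with hn | rfl
    · rw [𝓕.F_supp _ _ (by omega), if_neg (by omega), sub_zero]
    · rw [𝓕.F_comm, 𝓕.F_modw]; simp
  have hu : ofPowerSeries ℤ R 𝓕.p = (↑(oneAddUnit h hpos ^ (-1 : ℤ)) : HahnSeries ℤ R) := by
    rw [zpow_neg_one]
    refine Units.eq_inv_of_mul_eq_one_left ?_
    rw [oneAddUnit_val, hdef, add_sub_cancel, ← map_mul, q_mul_p, map_one]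
  funext n
  rw [hu, coeff_oneAddUnit_zpow, pF, invOne]
  refine finsum_congr fun k => ?_
  rw [ringChoose_eq_zbinom, zbinom_neg_one, coeff_pow_eq_pow1, hc]
  simp

/-- The formal inverse as a unit of the ring of Laurent series. -/
def iotaLead : LeadUnit ℤ R where
  exp := 1
  c := -1
  h := single (-1) (-1) * ofPowerSeries ℤ R 𝓕.iota - 1
  pos := orderTop_pos_of_coeff_eq_zero fun n hn => by
    rw [coeff_sub, coeff_one, coeff_single_mul, coeff_coe_iota]
    rcases hn.lt_or_eq with hn | rfl
    · rw [𝓕.inv_supp _ (by omega), if_neg (by omega)]; simp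
    · norm_num [𝓕.inv_one]

theorem iotaLead_unit : (𝓕.iotaLead.unit : HahnSeries ℤ R) = ofPowerSeries ℤ R 𝓕.iota := by
  rw [LeadUnit.unit_val]
  change single 1 ((-1 : Rˣ) : R) * (1 + (single (-1) (-1) * ofPowerSeries ℤ R 𝓕.iota - 1)) = _
  rw [add_sub_cancel, ← mul_assoc, single_mul_single]
  simp

theorem coeff_iotaLead_zpow (n a : ℤ) :
    (↑(𝓕.iotaLead.unit ^ n) : HahnSeries ℤ R).coeff a = iotaPow 𝓕.inv n a := by
  rw [LeadUnit.unit_zpow, coeff_single_mul, coeff_oneAddUnit_zpow, iotaPow]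
  change (((-1 : Rˣ) ^ n : Rˣ) : R) * _ = _
  rw [neg_one_zpow_eq_msign]
  have : 𝓕.iotaLead.h.coeff = hS 𝓕.inv := by
    funext j
    change (single (-1) (-1) * ofPowerSeries ℤ R 𝓕.iota - 1 : HahnSeries ℤ R).coeff j = _
    rw [coeff_sub, coeff_one, coeff_single_mul, coeff_coe_iota, hS, oneS]
    simp
  congr 1
  refine finsum_congr fun k => ?_
  rw [ringChoose_eq_zbinom, coeff_pow_eq_pow1, this]
  simp [iotaLead]

theorem constantCoeff_iota : PowerSeries.constantCoeff 𝓕.iota = 0 := by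
  rw [← PowerSeries.coeff_zero_eq_constantCoeff_apply, iota, PowerSeries.coeff_mk]
  exact 𝓕.inv_supp _ (by simp)

theorem hasSubst_iota_subst {σ : Type*} {f : MvPowerSeries σ R} (hf : PowerSeries.HasSubst f) :
    PowerSeries.HasSubst (𝓕.iota.subst f) := by
  obtain ⟨g, hg⟩ := PowerSeries.X_dvd_iff.mpr 𝓕.constantCoeff_iota
  rw [hg, PowerSeries.subst_mul hf, PowerSeries.subst_X hf]
  exact hf.mul_left

theorem ser_X_iota : MvPowerSeries.subst ![(MvPowerSeries.X 0 : MvPowerSeries (Fin 2) R),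
    𝓕.iota.subst (MvPowerSeries.X 0 : MvPowerSeries (Fin 2) R)] 𝓕.ser = 0 := by
  have hX : PowerSeries.HasSubst (MvPowerSeries.X 0 : MvPowerSeries (Fin 2) R) :=
    PowerSeries.HasSubst.X 0
  have key : ∀ d : Fin 2 →₀ ℕ, (d.prod fun s e => ![(MvPowerSeries.X 0 : MvPowerSeries (Fin 2) R),
    𝓕.iota.subst (MvPowerSeries.X 0 : MvPowerSeries (Fin 2) R)] s ^ e) =
      PowerSeries.subst (MvPowerSeries.X 0) (PowerSeries.X ^ d 0 * 𝓕.iota ^ d 1) := by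
    intro d
    rw [Finsupp.prod_fintype _ _ (fun _ => pow_zero _), Fin.prod_univ_two,
      PowerSeries.subst_mul hX, PowerSeries.subst_pow hX, PowerSeries.subst_pow hX,
      PowerSeries.subst_X hX]
    rfl
  ext e
  rw [MvPowerSeries.coeff_subst (hasSubst_pair hX (𝓕.hasSubst_iota_subst hX)), map_zero]
  simp only [key, PowerSeries.coeff_subst_single, smul_eq_mul, mul_ite, mul_zero]
  split_ifs
  · rw [← 𝓕.inv_eq (e 0)]
    have hinj : Function.Injective fun d : Fin 2 →₀ ℕ => ((d 0 : ℤ), d 1) := by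
      intro d d' h
      obtain ⟨h0, h1⟩ := Prod.mk.inj h
      rw [← exp2_eta d, ← exp2_eta d', Int.natCast_inj.mp h0, h1]
    rw [finsum_eq_comp_of_injective hinj]
    · refine finsum_congr fun d => ?_
      rw [coeff_ser, ← 𝓕.coeff_coe_iota, ← coeff_pow_eq_pow1, ← LaurentSeries.coeff_coe_powerSeries,
        map_mul, map_pow, map_pow, ofPowerSeries_X, single_pow, coeff_single_mul]
      simp
    · rintro ⟨a, k⟩ h
      rw [𝓕.F_supp, zero_mul]
      by_contra hc
      refine h ⟨exp2 a.toNat k, ?_⟩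
      simp only [exp2_zero, exp2_one, Prod.mk.injEq, and_true]
      simp only at hc
      omega
  · exact finsum_zero

section Points

variable {σ : Type*} {f g : MvPowerSeries σ R}

/-- A series viewed as a point of the formal group. -/
abbrev pt (f : MvPowerSeries σ R) (hf : PowerSeries.HasSubst f) : 𝓕.toFormalGroup.Point σ := ⟨f, hf⟩

theorem ser_subst_iota (hf : PowerSeries.HasSubst f) :
    MvPowerSeries.subst ![f, 𝓕.iota.subst f] 𝓕.ser = 0 := by
  have h0 : MvPowerSeries.HasSubst ![f, f] := hasSubst_pair hf hf
  have hX : PowerSeries.HasSubst (MvPowerSeries.X 0 : MvPowerSeries (Fin 2) R) :=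
    PowerSeries.HasSubst.X 0
  have h := congrArg (MvPowerSeries.subst ![f, f]) 𝓕.ser_X_iota
  rw [subst_pair_subst (hasSubst_pair hX (𝓕.hasSubst_iota_subst hX)) h0, subst_power_subst hX h0,
    MvPowerSeries.subst_X h0, ← MvPowerSeries.coe_substAlgHom h0, map_zero] at h
  exact h

theorem hasSubst_ser (hf : PowerSeries.HasSubst f) (hg : PowerSeries.HasSubst g) :
    PowerSeries.HasSubst (MvPowerSeries.subst ![f, g] 𝓕.ser) :=
  (𝓕.pt f hf + 𝓕.pt g hg).2

theorem pt_add_iota (hf : PowerSeries.HasSubst f) :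
    𝓕.pt f hf + 𝓕.pt (𝓕.iota.subst f) (𝓕.hasSubst_iota_subst hf) = 0 :=
  Subtype.ext (𝓕.ser_subst_iota hf)

theorem iota_iota (hf : PowerSeries.HasSubst f) :
    𝓕.iota.subst (𝓕.iota.subst f : MvPowerSeries σ R) = f := by
  have h1 := 𝓕.pt_add_iota hf
  have h2 := 𝓕.pt_add_iota (𝓕.hasSubst_iota_subst hf)
  have h3 : 𝓕.pt f hf = 𝓕.pt _ (𝓕.hasSubst_iota_subst (𝓕.hasSubst_iota_subst hf)) :=
    left_neg_eq_right_neg h1 h2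
  exact (congrArg (fun x : 𝓕.toFormalGroup.Point σ => x.1) h3).symm

theorem ser_ser_iota (hf : PowerSeries.HasSubst f) (hg : PowerSeries.HasSubst g) :
    MvPowerSeries.subst ![MvPowerSeries.subst ![f, g] 𝓕.ser, 𝓕.iota.subst g] 𝓕.ser = f := by
  have h := 𝓕.pt_add_iota hg
  have : (𝓕.pt f hf + 𝓕.pt g hg) + 𝓕.pt (𝓕.iota.subst g) (𝓕.hasSubst_iota_subst hg) = 𝓕.pt f hf := by
    rw [_root_.add_assoc, h, _root_.add_zero]
  exact congrArg Subtype.val this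

theorem ser_iota_ser (hf : PowerSeries.HasSubst f) (hg : PowerSeries.HasSubst g) :
    MvPowerSeries.subst ![𝓕.iota.subst f, MvPowerSeries.subst ![f, g] 𝓕.ser] 𝓕.ser = g := by
  rw [𝓕.ser_subst_swap (𝓕.hasSubst_iota_subst hf) (𝓕.hasSubst_ser hf hg), 𝓕.ser_subst_swap hf hg,
    𝓕.ser_ser_iota hg hf]

end Points

end FormalGroupLaw

end OneVariable

noncomputable section InvariantDifferential

open HahnSeries

theorem co_emb_subst {R : Type*} [CommRing R] {a : MvPowerSeries (Fin 2) R}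
    (ha : PowerSeries.HasSubst a) (f : PowerSeries R) (i j : ℤ) :
    co (emb (f.subst a)) i j = ∑ᶠ n : ℕ, PowerSeries.coeff n f * co (emb (a ^ n)) i j := by
  simp only [co_emb]
  split_ifs
  · rw [PowerSeries.coeff_subst ha]
    rfl
  · simp

theorem co_natCast_mul {R : Type*} [CommRing R] (m : ℕ) (f : LaurentXY R) (i j : ℤ) :
    co ((m : LaurentXY R) * f) i j = m * co f i j := by
  rw [← nsmul_eq_mul, ← nsmul_eq_mul]
  rfl

theorem mono_one_pow {R : Type*} [CommRing R] (i j : ℤ) (k : ℕ) :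
    (mono i j (1 : R)) ^ k = mono (k * i) (k * j) 1 := by
  rw [mono, single_pow, one_pow, mono, ← natCast_zsmul, xy_smul]

theorem exists_X0_mul {R : Type*} [CommRing R] (f : MvPowerSeries (Fin 2) R)
    (h : ∀ j, co (emb f) 0 j = 0) : ∃ g, f = MvPowerSeries.X 0 * g := by
  refine MvPowerSeries.X_dvd_iff.mpr fun m hm => ?_
  have := h (m 1)
  rw [← emb_coeff, xyExp_apply, hm]
  exact this

namespace FormalGroupLaw

variable {R : Type*} [CommRing R] (𝓕 : FormalGroupLaw R)

/-- The formal inverse of `x`. -/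
abbrev ix : MvPowerSeries (Fin 2) R := 𝓕.iota.subst (MvPowerSeries.X 0)

/-- The formal inverse of `y`. -/
abbrev iy : MvPowerSeries (Fin 2) R := 𝓕.iota.subst (MvPowerSeries.X 1)

/-- The invariant differential in `x`. -/
abbrev px : LaurentXY R := emb (𝓕.p.subst (MvPowerSeries.X 0))

/-- The invariant differential in `y`. -/
abbrev py : LaurentXY R := emb (𝓕.p.subst (MvPowerSeries.X 1))

theorem hasSubst_ser' : PowerSeries.HasSubst 𝓕.ser :=
  PowerSeries.HasSubst.of_constantCoeff_zero 𝓕.constantCoeff_ser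

theorem co_px (i j : ℤ) : co 𝓕.px i j = if j = 0 then 𝓕.pF i else 0 := by
  rw [px, emb_subst_X0, co_inX, coeff_coe_p]

theorem co_py (i j : ℤ) : co 𝓕.py i j = if i = 0 then 𝓕.pF j else 0 := by
  rw [py, emb_subst_X1, co_inY, coeff_coe_p]

theorem co_ix (i j : ℤ) : co (emb 𝓕.ix) i j = if j = 0 then 𝓕.inv i else 0 := by
  rw [emb_subst_X0, co_inX, coeff_coe_iota]

theorem co_iy (i j : ℤ) : co (emb 𝓕.iy) i j = if i = 0 then 𝓕.inv j else 0 := by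
  rw [emb_subst_X1, co_inY, coeff_coe_iota]

theorem pow2_F_one (m : ℕ) (b : ℤ) : pow2 𝓕.F m 1 b = (m : R) * 𝓕.F (b - m + 1) 1 := by
  obtain ⟨g, hg⟩ := exists_X0_mul (𝓕.ser - MvPowerSeries.X 1) (fun j => by
    rw [map_sub, co_sub, co_ser, emb_X1, co_mono, 𝓕.F_comm, 𝓕.F_modw]
    split_ifs <;> first | omega | simp)
  have hg0 : ∀ j, co (emb g) 0 j = 𝓕.F j 1 := by
    intro j
    have h := congrArg (fun f => co (emb f) 1 j) hg
    simp only [map_sub, co_sub, co_ser, map_mul, emb_X0, emb_X1, co_mono_mul, co_mono] at h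
    rw [if_neg (by omega), sub_zero, 𝓕.F_comm, one_mul, sub_self, sub_zero] at h
    exact h.symm
  rcases Nat.eq_zero_or_pos m with rfl | hm
  · simp [pow2, oneS2]
  rw [sub_eq_iff_eq_add'] at hg
  obtain ⟨k, hk⟩ := Polynomial.powAddExpansion (MvPowerSeries.X 1) (MvPowerSeries.X 0 * g) m
  rw [pow2_F, hg, hk]
  rw [show MvPowerSeries.X 1 ^ m + (m : MvPowerSeries (Fin 2) R) * MvPowerSeries.X 1 ^ (m - 1) *
      (MvPowerSeries.X 0 * g) + k * (MvPowerSeries.X 0 * g) ^ 2 =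
      MvPowerSeries.X 1 ^ m * 1 + (m : MvPowerSeries (Fin 2) R) *
        (MvPowerSeries.X 0 * (MvPowerSeries.X 1 ^ (m - 1) * g)) +
        MvPowerSeries.X 0 ^ 2 * (k * g ^ 2) by ring]
  simp only [map_add, map_mul, map_pow, map_natCast, map_one, emb_X0, emb_X1, mono_one_pow, co_add,
    co_natCast_mul, co_mono_mul, co_one, oneS2]
  rw [← map_pow, ← map_mul, co_emb (k * g ^ 2), if_neg (by omega), if_neg (by omega)]
  rw [show (1 : ℤ) - 1 - (m - 1 : ℕ) * 0 = 0 by ring,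
    show b - 0 - ((m - 1 : ℕ) : ℤ) * 1 = b - m + 1 by push_cast [Nat.cast_sub hm]; ring, hg0]
  ring

theorem co_q_ser (i j : ℤ) :
    co (emb (𝓕.q.subst 𝓕.ser)) i j = ∑ᶠ n : ℕ, 𝓕.F 1 n * pow2 𝓕.F n i j := by
  rw [co_emb_subst 𝓕.hasSubst_ser']
  refine finsum_congr fun n => ?_
  rw [pow2_F, q, PowerSeries.coeff_mk, 𝓕.F_comm]

theorem eulerX_ser_mul_q : euler degX (emb 𝓕.ser) * emb (𝓕.q.subst (MvPowerSeries.X 0)) =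
    mono 1 0 1 * emb (𝓕.q.subst 𝓕.ser) := by
  refine co_ext fun i j => ?_
  rw [co_mono_mul, co_q_ser, one_mul, sub_zero, ← 𝓕.F_assoc, co_mul, mulS2]
  have hinj : Function.Injective fun m : ℕ => ((m : ℤ), j) := fun m n h =>
    Int.natCast_inj.mp (Prod.mk.inj h).1
  rw [finsum_eq_comp_of_injective hinj]
  · refine finsum_congr fun m => ?_
    rw [pow2_F_one, co_euler_degX, co_ser, emb_subst_X0, co_inX, sub_self, if_pos rfl,
      coeff_coe_q, smul_eq_mul, sub_right_comm, sub_add_cancel]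
    push_cast
    ring
  · rintro ⟨a, b⟩ h
    rw [co_euler_degX, co_ser, emb_subst_X0, co_inX]
    simp only
    by_cases hb : j - b = 0
    · rw [𝓕.F_supp, mul_zero, zero_smul]
      by_contra hc
      exact h ⟨a.toNat, by simp only [Prod.mk.injEq]; omega⟩
    · rw [if_neg hb, smul_zero]

end FormalGroupLaw

end InvariantDifferential

noncomputable section Residues

open HahnSeries

section Swap

variable {R : Type*} [CommRing R]

/-- `f'` arises from `f` by exchanging the two variables. -/
def Sw (f f' : LaurentXY R) : Prop := ∀ i j, co f i j = co f' j i

theorem Sw.symm {f f' : LaurentXY R} (h : Sw f f') : Sw f' f := fun i j => (h j i).symm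

theorem Sw.unique {f f₁ f₂ : LaurentXY R} (h₁ : Sw f f₁) (h₂ : Sw f f₂) : f₁ = f₂ :=
  co_ext fun i j => (h₁ j i).symm.trans (h₂ j i)

theorem Sw.mul {f f' g g' : LaurentXY R} (hf : Sw f f') (hg : Sw g g') : Sw (f * g) (f' * g') := by
  intro i j
  rw [co_mul, co_mul, mulS2, mulS2]
  refine finsum_eq_of_bijective _ (Equiv.prodComm ℤ ℤ).bijective fun p => ?_
  rw [hf, hg]
  rfl

theorem Sw.mono (i j : ℤ) (r : R) : Sw (mono i j r) (mono j i r) := fun k l => by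
  rw [co_mono, co_mono]
  simp only [and_comm]

theorem Sw.euler {f f' : LaurentXY R} (h : Sw f f') : Sw (euler degX f) (euler degY f') :=
  fun i j => by rw [co_euler_degX, co_euler_degY, h]

theorem hasSubst_swap : MvPowerSeries.HasSubst
    ![(MvPowerSeries.X 1 : MvPowerSeries (Fin 2) R), MvPowerSeries.X 0] :=
  hasSubst_pair (PowerSeries.HasSubst.X 1) (PowerSeries.HasSubst.X 0)

/-- Exchange of the two variables of a power series. -/
def swap : MvPowerSeries (Fin 2) R →+* MvPowerSeries (Fin 2) R :=
  (MvPowerSeries.substAlgHom (R := R) (hasSubst_swap (R := R))).toRingHom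

theorem swap_apply (f : MvPowerSeries (Fin 2) R) :
    swap f = MvPowerSeries.subst ![MvPowerSeries.X 1, MvPowerSeries.X 0] f := by
  rw [← MvPowerSeries.coe_substAlgHom hasSubst_swap]
  rfl

theorem swap_X0 : swap (MvPowerSeries.X 0 : MvPowerSeries (Fin 2) R) = MvPowerSeries.X 1 := by
  rw [swap_apply, MvPowerSeries.subst_X hasSubst_swap]
  rfl

theorem swap_X1 : swap (MvPowerSeries.X 1 : MvPowerSeries (Fin 2) R) = MvPowerSeries.X 0 := by
  rw [swap_apply, MvPowerSeries.subst_X hasSubst_swap]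
  rfl

theorem swap_subst_pair {a b : MvPowerSeries (Fin 2) R} (h : MvPowerSeries.HasSubst ![a, b])
    (f : MvPowerSeries (Fin 2) R) :
    swap (MvPowerSeries.subst ![a, b] f) = MvPowerSeries.subst ![swap a, swap b] f := by
  simp only [swap_apply, subst_pair_subst h hasSubst_swap]

theorem swap_subst {a : MvPowerSeries (Fin 2) R} (h : PowerSeries.HasSubst a)
    (f : PowerSeries R) : swap (f.subst a) = f.subst (swap a) := by
  simp only [swap_apply, subst_power_subst h hasSubst_swap]

theorem swap_subst_X0 (f : PowerSeries R) :
    swap (f.subst (MvPowerSeries.X 0 : MvPowerSeries (Fin 2) R)) = f.subst (MvPowerSeries.X 1) := by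
  rw [swap_subst (PowerSeries.HasSubst.X 0), swap_X0]

theorem swap_subst_X1 (f : PowerSeries R) :
    swap (f.subst (MvPowerSeries.X 1 : MvPowerSeries (Fin 2) R)) = f.subst (MvPowerSeries.X 0) := by
  rw [swap_subst (PowerSeries.HasSubst.X 1), swap_X1]

theorem coeff_swap (f : MvPowerSeries (Fin 2) R) (m n : ℕ) :
    MvPowerSeries.coeff (exp2 m n) (swap f) = MvPowerSeries.coeff (exp2 n m) f := by
  classical
  have key : ∀ d : Fin 2 →₀ ℕ, (d.prod fun s e =>
      ![(MvPowerSeries.X 1 : MvPowerSeries (Fin 2) R), MvPowerSeries.X 0] s ^ e) =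
      MvPowerSeries.monomial (exp2 (d 1) (d 0)) 1 := by
    intro d
    rw [Finsupp.prod_fintype _ _ (fun _ => pow_zero _), Fin.prod_univ_two]
    simp [MvPowerSeries.X_pow_eq, MvPowerSeries.monomial_mul_monomial, exp2, add_comm]
  rw [swap_apply, MvPowerSeries.coeff_subst hasSubst_swap, finsum_eq_single _ (exp2 n m)]
  · rw [key, exp2_zero, exp2_one, MvPowerSeries.coeff_monomial_same, smul_eq_mul, mul_one]
  · intro d hd
    rw [key, MvPowerSeries.coeff_monomial, if_neg, smul_zero]
    intro h
    refine hd ?_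
    have h0 := DFunLike.congr_fun h 0
    have h1 := DFunLike.congr_fun h 1
    simp only [exp2_zero, exp2_one] at h0 h1
    rw [← exp2_eta d, h0, h1]

theorem Sw.emb (f : MvPowerSeries (Fin 2) R) : Sw (emb f) (emb (swap f)) := by
  intro i j
  by_cases h : 0 ≤ i ∧ 0 ≤ j
  · obtain ⟨m, rfl⟩ := Int.eq_ofNat_of_zero_le h.1
    obtain ⟨n, rfl⟩ := Int.eq_ofNat_of_zero_le h.2
    rw [co_emb_natCast, co_emb_natCast, coeff_swap]
  · rw [co_emb, co_emb, if_neg h, if_neg (by omega)]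

end Swap

section Substitution

variable {R : Type*} [CommRing R] (s : SubData R)

theorem SubData.hom_emb_X0 (f : PowerSeries R) :
    s.mon.hom (emb (f.subst (MvPowerSeries.X 0))) = emb (f.subst s.a) := by
  rw [s.hom_emb, subst_power_subst (PowerSeries.HasSubst.X 0) s.hasSubst,
    MvPowerSeries.subst_X s.hasSubst]
  rfl

theorem SubData.hom_emb_X1 (f : PowerSeries R) :
    s.mon.hom (emb (f.subst (MvPowerSeries.X 1))) = emb (f.subst s.b) := by
  rw [s.hom_emb, subst_power_subst (PowerSeries.HasSubst.X 1) s.hasSubst,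
    MvPowerSeries.subst_X s.hasSubst]
  rfl

theorem SubData.hom_X : s.mon.hom (mono 1 0 1) = emb s.a := by
  rw [← emb_X0, s.hom_emb, MvPowerSeries.subst_X s.hasSubst]
  rfl

theorem SubData.hom_Y : s.mon.hom (mono 0 1 1) = emb s.b := by
  rw [← emb_X1, s.hom_emb, MvPowerSeries.subst_X s.hasSubst]
  rfl

theorem SubData.B_zpow (hb : s.b = MvPowerSeries.X 1) (n : ℤ) :
    (↑(s.B ^ n) : LaurentXY R) = mono 0 n 1 := by
  have : s.B = monoUnit (xy 0 1) 1 := Units.ext (by rw [s.B_val, hb, emb_X1]; rfl)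
  rw [this, monoUnit_zpow, monoUnit_val, xy_smul, mul_zero, mul_one, one_zpow]
  rfl

theorem SubData.residue_hom (hb : s.b = MvPowerSeries.X 1) {p : LaurentXY R} {ε : R}
    (h : s.mon.hom p * euler degX (emb s.a) = mono 1 0 ε * p) (f : LaurentXY R) (n : ℤ) :
    ε * co (s.mon.hom f * p) (-1) n = co (f * p) (-1) n := by
  have h1 : mono 1 0 ε * (s.mon.hom f * p) = s.mon.hom (f * p) * euler degX (emb s.a) := by
    rw [map_mul, mul_assoc, h]; ring
  have h2 := congrArg (fun g => co g 0 n) h1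
  simp only [co_mono_mul, zero_sub, sub_zero] at h2
  rw [h2]
  change (s.mon.ap (f * p) * _).coeff _ = _
  rw [s.mon.coeff_ap_mul, finsum_eq_single _ (xy (-1) n)]
  · have hU : (s.A : LaurentXY R) = single (xy 1 0) (s.c : R) * (1 + s.leadA.h) :=
      s.leadA.unit_val
    have h3 := coeff_zpow_mul_euler degX s.A s.leadA.pos hU (-1) (n := xy 0 0) (degX_xy 0 0)
    rw [A_val, degX_xy] at h3
    rw [img_xy, s.B_zpow hb, mul_comm (↑(s.A ^ (-1 : ℤ)) : LaurentXY R), mul_assoc]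
    change _ * co (mono 0 n 1 * _) 0 n = _
    rw [co_mono_mul, one_mul, sub_self n]
    change _ * ((↑(s.A ^ (-1 : ℤ)) : LaurentXY R) * _).coeff (xy 0 0) = _
    rw [h3, if_pos ⟨rfl, rfl⟩]
    simp [co]
  · intro γ hγ
    obtain ⟨k, l, rfl⟩ := xy_surj γ
    have hU : (s.A : LaurentXY R) = single (xy 1 0) (s.c : R) * (1 + s.leadA.h) :=
      s.leadA.unit_val
    have h3 := coeff_zpow_mul_euler degX s.A s.leadA.pos hU k (n := xy 0 (n - l)) (degX_xy _ _)
    rw [A_val] at h3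
    rw [img_xy, s.B_zpow hb, mul_comm (↑(s.A ^ k) : LaurentXY R), mul_assoc]
    change _ * co (mono 0 l 1 * _) 0 n = _
    rw [co_mono_mul, sub_zero, one_mul]
    change _ * ((↑(s.A ^ k) : LaurentXY R) * _).coeff (xy 0 (n - l)) = _
    rw [h3, if_neg, mul_zero]
    rintro ⟨rfl, h4⟩
    rw [← xy_zero, xy_inj] at h4
    exact hγ (by rw [xy_inj]; omega)

end Substitution

namespace FormalGroupLaw

variable {R : Type*} [CommRing R] (𝓕 : FormalGroupLaw R)

/-- The substitution `x ↦ F(x, y)`. -/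
def subT : SubData R where
  a := 𝓕.ser
  b := MvPowerSeries.X 1
  c := 1
  d := 1
  ha0 := by rw [co_ser, 𝓕.F_modw]; simp
  ha1 := by rw [co_ser, 𝓕.F_modw]; simp
  hb0 := fun i => by rw [emb_X1, co_mono, if_neg (by omega)]
  hb1 := by rw [emb_X1, co_mono, if_pos (by omega), Units.val_one]

/-- The substitution `x ↦ ι(x)`. -/
def subJ : SubData R where
  a := 𝓕.ix
  b := MvPowerSeries.X 1
  c := -1
  d := 1
  ha0 := by rw [co_ix, 𝓕.inv_supp _ (by omega)]; simp
  ha1 := by rw [co_ix, 𝓕.inv_one]; simp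
  hb0 := fun i => by rw [emb_X1, co_mono, if_neg (by omega)]
  hb1 := by rw [emb_X1, co_mono, if_pos (by omega), Units.val_one]

/-- The substitution `x ↦ F(x, y)`, `y ↦ ι(y)`. -/
def subS : SubData R where
  a := 𝓕.ser
  b := 𝓕.iy
  c := 1
  d := -1
  ha0 := by rw [co_ser, 𝓕.F_modw]; simp
  ha1 := by rw [co_ser, 𝓕.F_modw]; simp
  hb0 := fun i => by rw [co_iy, 𝓕.inv_supp _ (by omega)]; simp
  hb1 := by rw [co_iy, 𝓕.inv_one]; simp

theorem swap_ser : swap 𝓕.ser = 𝓕.ser := by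
  rw [swap_apply, ← 𝓕.ser_subst_swap (PowerSeries.HasSubst.X 0) (PowerSeries.HasSubst.X 1),
    subst_X0_X1]

theorem p_mul_q_subst {σ : Type*} {a : MvPowerSeries σ R} (ha : PowerSeries.HasSubst a) :
    𝓕.p.subst a * 𝓕.q.subst a = 1 := by
  rw [← PowerSeries.subst_mul ha, mul_comm, q_mul_p]
  exact (congrFun (PowerSeries.coe_substAlgHom ha) (1 : PowerSeries R)).symm.trans
    (map_one (PowerSeries.substAlgHom (R := R) ha))

theorem p_ser_mul_eulerX : emb (𝓕.p.subst 𝓕.ser) * euler degX (emb 𝓕.ser) = mono 1 0 1 * 𝓕.px := by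
  have h1 : 𝓕.px * emb (𝓕.q.subst (MvPowerSeries.X 0)) = 1 := by
    rw [← map_mul, 𝓕.p_mul_q_subst (PowerSeries.HasSubst.X 0), map_one]
  have h2 : emb (𝓕.p.subst 𝓕.ser) * emb (𝓕.q.subst 𝓕.ser) = 1 := by
    rw [← map_mul, 𝓕.p_mul_q_subst 𝓕.hasSubst_ser', map_one]
  linear_combination (𝓕.px * emb (𝓕.p.subst 𝓕.ser)) * 𝓕.eulerX_ser_mul_q -
    emb (𝓕.p.subst 𝓕.ser) * euler degX (emb 𝓕.ser) * h1 + mono 1 0 1 * 𝓕.px * h2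

theorem sw_px : Sw 𝓕.px 𝓕.py := by
  have := Sw.emb (𝓕.p.subst (MvPowerSeries.X 0 : MvPowerSeries (Fin 2) R))
  rwa [swap_subst_X0] at this

theorem p_ser_mul_eulerY : emb (𝓕.p.subst 𝓕.ser) * euler degY (emb 𝓕.ser) = mono 0 1 1 * 𝓕.py := by
  have h1 : Sw (emb (𝓕.p.subst 𝓕.ser)) (emb (𝓕.p.subst 𝓕.ser)) := by
    have := Sw.emb (𝓕.p.subst 𝓕.ser)
    rwa [swap_subst 𝓕.hasSubst_ser', swap_ser] at this
  have h2 : Sw (emb 𝓕.ser) (emb 𝓕.ser) := by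
    have := Sw.emb 𝓕.ser
    rwa [swap_ser] at this
  refine (h1.mul h2.euler).unique ?_
  rw [p_ser_mul_eulerX]
  exact (Sw.mono 1 0 1).mul 𝓕.sw_px

theorem hasSubst_ix : PowerSeries.HasSubst 𝓕.ix := 𝓕.hasSubst_iota_subst (PowerSeries.HasSubst.X 0)

theorem hasSubst_iy : PowerSeries.HasSubst 𝓕.iy := 𝓕.hasSubst_iota_subst (PowerSeries.HasSubst.X 1)

theorem subst_ser_iy_ser : MvPowerSeries.subst ![𝓕.ser, 𝓕.iy] 𝓕.ser = MvPowerSeries.X 0 := by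
  have := 𝓕.ser_ser_iota (PowerSeries.HasSubst.X (0 : Fin 2)) (PowerSeries.HasSubst.X (1 : Fin 2))
  rwa [subst_X0_X1] at this

theorem p_iota_mul_eulerY : emb (𝓕.p.subst 𝓕.iy) * euler degY (emb 𝓕.iy) =
    - (mono 0 1 1 * 𝓕.py) := by
  have hS : 𝓕.subS.mon.hom (emb 𝓕.ser) = mono 1 0 1 := by
    rw [SubData.hom_emb, ← emb_X0]
    exact congrArg emb 𝓕.subst_ser_iy_ser
  have hp : 𝓕.subS.mon.hom (emb (𝓕.p.subst 𝓕.ser)) = 𝓕.px := by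
    rw [SubData.hom_emb, subst_power_subst 𝓕.hasSubst_ser' 𝓕.subS.hasSubst]
    exact congrArg (fun f => emb (𝓕.p.subst f)) 𝓕.subst_ser_iy_ser
  have hx := congrArg 𝓕.subS.mon.hom 𝓕.p_ser_mul_eulerX
  have hy := congrArg 𝓕.subS.mon.hom 𝓕.p_ser_mul_eulerY
  rw [map_mul, map_mul, hp, SubData.hom_X, SubData.hom_emb_X0] at hx
  rw [map_mul, map_mul, hp, SubData.hom_Y, SubData.hom_emb_X1] at hy
  have hc := 𝓕.subS.euler_hom degY (emb 𝓕.ser)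
  have h0 : euler degY (mono 1 0 (1 : R)) = 0 := co_ext fun i j => by
    rw [co_euler_degY, co_mono]
    split_ifs with h
    · rw [h.2]; simp [co]
    · simp [co]
  rw [hS, h0] at hc
  have hA := 𝓕.subS.A.mul_inv
  have hB := 𝓕.subS.B.mul_inv
  rw [SubData.A_val] at hA
  rw [SubData.B_val] at hB
  have hF := 𝓕.p_ser_mul_eulerY
  change 𝓕.px * _ = emb 𝓕.ser * emb (𝓕.p.subst 𝓕.ser) at hx
  change 𝓕.px * _ = emb 𝓕.iy * emb (𝓕.p.subst 𝓕.iy) at hy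
  change emb 𝓕.ser * _ = 1 at hA
  change emb 𝓕.iy * _ = 1 at hB
  change 0 = _ * (_ * euler degY (emb 𝓕.ser)) + _ * (_ * euler degY (emb 𝓕.iy)) at hc
  linear_combination -𝓕.px * hc - (↑𝓕.subS.A⁻¹ : LaurentXY R) * euler degY (emb 𝓕.ser) * hx
    - (↑𝓕.subS.B⁻¹ : LaurentXY R) * euler degY (emb 𝓕.iy) * hy
    - emb (𝓕.p.subst 𝓕.ser) * euler degY (emb 𝓕.ser) * hA
    - emb (𝓕.p.subst 𝓕.iy) * euler degY (emb 𝓕.iy) * hB - hF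

theorem p_iota_mul_eulerX : emb (𝓕.p.subst 𝓕.ix) * euler degX (emb 𝓕.ix) =
    mono 1 0 (-1) * 𝓕.px := by
  have h1 := Sw.emb 𝓕.ix
  rw [swap_subst_X0] at h1
  have h2 := Sw.emb (𝓕.p.subst 𝓕.ix)
  rw [swap_subst 𝓕.hasSubst_ix, swap_subst_X0] at h2
  refine (h2.mul h1.euler).symm.unique ?_
  rw [p_iota_mul_eulerY, ← neg_mul, show -mono 0 1 (1 : R) = mono 0 1 (-1) from (single_neg _ _).symm]
  exact ((Sw.mono 1 0 (-1)).mul 𝓕.sw_px).symm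

theorem co_subT_zpow (n : ℤ) : co (↑(𝓕.subT.A ^ n) : LaurentXY R) = izwPow 𝓕.F n := by
  have hh : co 𝓕.subT.leadA.h = hzS 𝓕.F := by
    funext i j
    change co (mono (-1) 0 (↑(1 : Rˣ)⁻¹ : R) * emb 𝓕.ser - 1) i j = _
    rw [co_sub, co_mono_mul, co_one, co_ser, hzS]
    simp
  funext i j
  rw [SubData.A, LeadUnit.unit_zpow]
  change co (single (n • xy 1 0) (↑((1 : Rˣ) ^ n) : R) * _) i j = _
  rw [one_zpow, Units.val_one, xy_smul, mul_one, mul_zero]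
  change co (mono n 0 1 * _) i j = _
  rw [co_mono_mul, one_mul, co, coeff_oneAddUnit_zpow, izwPow]
  refine finsum_congr fun k => ?_
  rw [ringChoose_eq_zbinom, sub_zero, ← hh, ← co_pow]
  rfl

theorem co_subJ_zpow (n i j : ℤ) :
    co (↑(𝓕.subJ.A ^ n) : LaurentXY R) i j = if j = 0 then iotaPow 𝓕.inv n i else 0 := by
  have h : 𝓕.subJ.A = Units.map (inX (R := R) : HahnSeries ℤ R →* LaurentXY R) 𝓕.iotaLead.unit := by
    refine Units.ext ?_
    rw [SubData.A_val, Units.coe_map, iotaLead_unit]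
    exact emb_subst_X0 _
  rw [h, ← map_zpow, Units.coe_map]
  change co (inX _) i j = _
  rw [co_inX, coeff_iotaLead_zpow]

/-- The iterated residue. -/
def res2 (f : LaurentXY R) : R := co (f * 𝓕.px * 𝓕.py) (-1) (-1)

theorem res2_swap {f f' : LaurentXY R} (h : Sw f f') : 𝓕.res2 f = 𝓕.res2 f' := by
  rw [res2, (h.mul 𝓕.sw_px).mul 𝓕.sw_px.symm, res2, mul_right_comm]

theorem res2_sub (f g : LaurentXY R) : 𝓕.res2 (f - g) = 𝓕.res2 f - 𝓕.res2 g := by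
  rw [res2, sub_mul, sub_mul]; rfl

theorem residue_subT (f : LaurentXY R) (n : ℤ) :
    co (𝓕.subT.mon.hom f * 𝓕.px) (-1) n = co (f * 𝓕.px) (-1) n := by
  have h := 𝓕.subT.residue_hom rfl (p := 𝓕.px) (ε := 1)
    (by rw [SubData.hom_emb_X0]; exact 𝓕.p_ser_mul_eulerX) f n
  rwa [one_mul] at h

theorem residue_subJ (f : LaurentXY R) (n : ℤ) :
    co (𝓕.subJ.mon.hom f * 𝓕.px) (-1) n = - co (f * 𝓕.px) (-1) n := by
  have h := 𝓕.subJ.residue_hom rfl (p := 𝓕.px) (ε := -1)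
    (by rw [SubData.hom_emb_X0]; exact 𝓕.p_iota_mul_eulerX) f n
  rw [← h, neg_one_mul, neg_neg]

theorem subT_py : 𝓕.subT.mon.hom 𝓕.py = 𝓕.py := 𝓕.subT.hom_emb_X1 _

theorem subJ_py : 𝓕.subJ.mon.hom 𝓕.py = 𝓕.py := 𝓕.subJ.hom_emb_X1 _

theorem res2_subT (f : LaurentXY R) : 𝓕.res2 (𝓕.subT.mon.hom f) = 𝓕.res2 f := by
  rw [res2, res2, mul_right_comm, mul_right_comm f]
  have h := 𝓕.residue_subT (f * 𝓕.py) (-1)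
  rwa [map_mul, subT_py] at h

theorem res2_subJ (f : LaurentXY R) : 𝓕.res2 (𝓕.subJ.mon.hom f) = - 𝓕.res2 f := by
  rw [res2, res2, mul_right_comm, mul_right_comm f]
  have h := 𝓕.residue_subJ (f * 𝓕.py) (-1)
  rwa [map_mul, subJ_py] at h

end FormalGroupLaw

end Residues

noncomputable section Reciprocity

open HahnSeries

variable {R : Type*} [CommRing R]

/-- The subring `R⟦y⟧`-like part of `R((x))((y))`, without negative powers of `y`. -/
def noNegY (R : Type*) [CommRing R] : Subring (LaurentXY R) where
  carrier := {f | ∀ i j, j < 0 → co f i j = 0}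
  mul_mem' := by
    intro f g hf hg i j hj
    rw [co_mul, mulS2]
    refine (finsum_congr fun p => ?_).trans finsum_zero
    by_cases hp : p.2 < 0
    · rw [hf _ _ hp, zero_smul]
    · rw [hg _ _ (by omega), smul_zero]
  one_mem' := fun i j hj => by rw [co_one, oneS2, if_neg (by omega)]
  add_mem' := fun hf hg i j hj => by rw [co_add, hf i j hj, hg i j hj, add_zero]
  zero_mem' := fun _ _ _ => rfl
  neg_mem' := fun hf i j hj => by rw [co_neg, hf i j hj, neg_zero]

theorem emb_mem_noNegY (f : MvPowerSeries (Fin 2) R) : emb f ∈ noNegY R := fun i j hj => by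
  rw [co_emb, if_neg (by omega)]

theorem mono_mem_noNegY (i : ℤ) {j : ℤ} (hj : 0 ≤ j) (r : R) : mono i j r ∈ noNegY R :=
  fun k l hl => by rw [co_mono, if_neg (by omega)]

theorem LeadUnit.zpow_mem_noNegY (A : LeadUnit (ℤ ×ₗ ℤ) R) (hA : degY A.exp = 0) (n : ℤ) :
    (↑(A.unit ^ n) : LaurentXY R) ∈ noNegY R := by
  rw [A.unit_zpow]
  refine mul_mem ?_ fun i j hj => ?_
  · obtain ⟨i, j, h⟩ := xy_surj A.exp
    rw [h, degY_xy] at hA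
    rw [h, hA, xy_smul, mul_zero]
    exact mono_mem_noNegY _ le_rfl _
  · by_contra hne
    have hmem := zpow_support_subset_closure A.h A.pos n hne
    have key : ∀ γ ∈ AddSubmonoid.closure A.h.support, 0 ≤ degY γ := by
      intro γ hγ
      induction hγ using AddSubmonoid.closure_induction with
      | mem γ hγ =>
        obtain ⟨i, j, rfl⟩ := xy_surj γ
        have h0 : (0 : ℤ ×ₗ ℤ) ≤ xy i j := by
          by_contra! hlt
          exact hγ (coeff_eq_zero_of_lt_orderTop (lt_trans (by exact_mod_cast hlt) A.pos))
        rw [← xy_zero, xy_le] at h0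
        rw [degY_xy]
        omega
      | zero => simp
      | add a b _ _ ha hb => rw [map_add]; exact add_nonneg ha hb
    have := key _ hmem
    rw [degY_xy] at this
    omega

namespace FormalGroupLaw

variable (𝓕 : FormalGroupLaw R)

theorem res2_eq_zero {f : LaurentXY R} (hf : f ∈ noNegY R) : 𝓕.res2 f = 0 :=
  mul_mem (mul_mem hf (emb_mem_noNegY _)) (emb_mem_noNegY _) _ _ (by omega)

theorem subT_A_zpow_mem (n : ℤ) : (↑(𝓕.subT.A ^ n) : LaurentXY R) ∈ noNegY R :=
  LeadUnit.zpow_mem_noNegY _ rfl n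

theorem subJ_A_zpow_mem (n : ℤ) : (↑(𝓕.subJ.A ^ n) : LaurentXY R) ∈ noNegY R :=
  LeadUnit.zpow_mem_noNegY _ rfl n

theorem exists_ser_eq : ∃ c, 𝓕.ser = MvPowerSeries.X 0 + MvPowerSeries.X 1 * c := by
  obtain ⟨c, hc⟩ : (MvPowerSeries.X 1 : MvPowerSeries (Fin 2) R) ∣ 𝓕.ser - MvPowerSeries.X 0 := by
    refine MvPowerSeries.X_dvd_iff.mpr fun m hm => ?_
    rw [← emb_coeff, xyExp_apply, hm, map_sub]
    change co (emb 𝓕.ser - emb (MvPowerSeries.X 0)) _ ((0 : ℕ) : ℤ) = 0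
    rw [co_sub, co_ser, emb_X0, co_mono, Nat.cast_zero, 𝓕.F_modw]
    simp [eq_comm]
  exact ⟨c, by rw [← hc]; ring⟩

theorem hasSubst_ix_ser : MvPowerSeries.HasSubst ![𝓕.ix, 𝓕.ser] :=
  hasSubst_pair 𝓕.hasSubst_ix 𝓕.hasSubst_ser'

theorem subst_ix_ser_ser : MvPowerSeries.subst ![𝓕.ix, 𝓕.ser] 𝓕.ser = MvPowerSeries.X 1 := by
  have := 𝓕.ser_iota_ser (PowerSeries.HasSubst.X (0 : Fin 2)) (PowerSeries.HasSubst.X (1 : Fin 2))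
  rwa [subst_X0_X1] at this

/-- The series `F(x,y)^(-N) x^k y^l g(x,y)`. -/
def recL (N : ℕ) (k l : ℤ) (g : MvPowerSeries (Fin 2) R) : LaurentXY R :=
  (↑(𝓕.subT.A ^ (-N : ℤ)) : LaurentXY R) * mono k l 1 * emb g

/-- The series `F(x,y)^l y^(-N) ι(x)^k g(ι(x), F(x,y))`. -/
def recR (N : ℕ) (k l : ℤ) (g : MvPowerSeries (Fin 2) R) : LaurentXY R :=
  (↑(𝓕.subT.A ^ l) : LaurentXY R) * mono 0 (-N) 1 * (↑(𝓕.subJ.A ^ k) : LaurentXY R) *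
    emb (MvPowerSeries.subst ![𝓕.ix, 𝓕.ser] g)

/-- `recL` satisfies the recursion given by `x = F - y c`. -/
theorem recL_succ {c : MvPowerSeries (Fin 2) R}
    (hc : 𝓕.ser = MvPowerSeries.X 0 + MvPowerSeries.X 1 * c) (N : ℕ) (k l : ℤ)
    (g : MvPowerSeries (Fin 2) R) :
    𝓕.recL (N + 1) k l g = 𝓕.recL N (k - 1) l g - 𝓕.recL (N + 1) (k - 1) (l + 1) (c * g) := by
  have hF : (𝓕.subT.A : LaurentXY R) = mono 1 0 1 + mono 0 1 1 * emb c := by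
    rw [SubData.A_val, ← emb_X0, ← emb_X1, ← map_mul, ← map_add]
    exact congrArg emb hc
  have h1 : mono k l (1 : R) = mono 1 0 1 * mono (k - 1) l 1 := by rw [mono_mul]; simp
  have h2 : mono (k - 1) (l + 1) (1 : R) = mono 0 1 1 * mono (k - 1) l 1 := by
    rw [mono_mul, add_comm 1 l]; simp
  have h3 : (↑(𝓕.subT.A ^ (-N : ℤ)) : LaurentXY R) =
      (↑(𝓕.subT.A ^ (-(N + 1 : ℕ) : ℤ)) : LaurentXY R) * 𝓕.subT.A := by
    rw [← Units.val_mul, ← zpow_add_one]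
    congr 2
    push_cast
    ring
  rw [recL, recL, recL, h1, h2, h3, hF, map_mul]
  ring

theorem recL_swap_succ {c : MvPowerSeries (Fin 2) R}
    (hc : 𝓕.ser = MvPowerSeries.X 0 + MvPowerSeries.X 1 * c) (N : ℕ) (k l : ℤ)
    (g : MvPowerSeries (Fin 2) R) :
    𝓕.recL (N + 1) l k (swap g) =
      𝓕.recL N l (k - 1) (swap g) - 𝓕.recL (N + 1) (l + 1) (k - 1) (swap (c * g)) := by
  have hF : (𝓕.subT.A : LaurentXY R) = mono 0 1 1 + mono 1 0 1 * emb (swap c) := by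
    rw [SubData.A_val, ← emb_X0, ← emb_X1, ← map_mul, ← map_add, ← swap_X0, ← swap_X1, ← map_mul,
      ← map_add, swap_X1, ← hc, swap_ser]
    rfl
  have h1 : mono l k (1 : R) = mono 0 1 1 * mono l (k - 1) 1 := by rw [mono_mul]; simp
  have h2 : mono (l + 1) (k - 1) (1 : R) = mono 1 0 1 * mono l (k - 1) 1 := by
    rw [mono_mul, add_comm 1 l]; simp
  have h3 : (↑(𝓕.subT.A ^ (-N : ℤ)) : LaurentXY R) =
      (↑(𝓕.subT.A ^ (-(N + 1 : ℕ) : ℤ)) : LaurentXY R) * 𝓕.subT.A := by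
    rw [← Units.val_mul, ← zpow_add_one]
    congr 2
    push_cast
    ring
  rw [recL, recL, recL, h1, h2, h3, hF, map_mul, map_mul]
  ring

theorem recR_succ {c : MvPowerSeries (Fin 2) R}
    (hc : 𝓕.ser = MvPowerSeries.X 0 + MvPowerSeries.X 1 * c) (N : ℕ) (k l : ℤ)
    (g : MvPowerSeries (Fin 2) R) :
    𝓕.recR (N + 1) k l g = 𝓕.recR N (k - 1) l g - 𝓕.recR (N + 1) (k - 1) (l + 1) (c * g) := by
  have hs := 𝓕.hasSubst_ix_ser
  have h0 : (MvPowerSeries.X 1 : MvPowerSeries (Fin 2) R) =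
      𝓕.ix + 𝓕.ser * MvPowerSeries.subst ![𝓕.ix, 𝓕.ser] c := by
    have h := congrArg (MvPowerSeries.subst ![𝓕.ix, 𝓕.ser]) hc
    rw [subst_ix_ser_ser, MvPowerSeries.subst_add hs, MvPowerSeries.subst_mul hs,
      MvPowerSeries.subst_X hs, MvPowerSeries.subst_X hs] at h
    exact h
  have hJ : (𝓕.subJ.A : LaurentXY R) + (𝓕.subT.A : LaurentXY R) * emb (MvPowerSeries.subst ![𝓕.ix, 𝓕.ser] c) =
      mono 0 1 1 := by
    rw [SubData.A_val, SubData.A_val, ← emb_X1, ← map_mul, ← map_add]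
    exact congrArg emb h0.symm
  have h1 : mono 0 (-N : ℤ) (1 : R) = mono 0 (-(N + 1 : ℕ) : ℤ) 1 * mono 0 1 1 := by
    rw [mono_mul]; push_cast; simp
  have h2 : (↑(𝓕.subJ.A ^ k) : LaurentXY R) = (↑(𝓕.subJ.A ^ (k - 1)) : LaurentXY R) * 𝓕.subJ.A := by
    rw [← Units.val_mul, ← zpow_add_one, sub_add_cancel]
  have h3 : (↑(𝓕.subT.A ^ (l + 1)) : LaurentXY R) = (↑(𝓕.subT.A ^ l) : LaurentXY R) * 𝓕.subT.A := by
    rw [← Units.val_mul, ← zpow_add_one]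
  rw [recR, recR, recR, h1, h2, h3, ← hJ, MvPowerSeries.subst_mul hs, map_mul]
  ring

theorem res2_recR_natCast (N : ℕ) (k : ℤ) (l : ℕ) (g : MvPowerSeries (Fin 2) R) :
    𝓕.res2 (𝓕.recR N k l g) = - 𝓕.res2 (𝓕.recL N l k (swap g)) := by
  have hX0 : PowerSeries.HasSubst (MvPowerSeries.X 0 : MvPowerSeries (Fin 2) R) :=
    PowerSeries.HasSubst.X 0
  have hX1 : PowerSeries.HasSubst (MvPowerSeries.X 1 : MvPowerSeries (Fin 2) R) :=
    PowerSeries.HasSubst.X 1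
  set G := MvPowerSeries.subst ![MvPowerSeries.X 0, 𝓕.iy] 𝓕.ser with hG
  set G' := MvPowerSeries.subst ![MvPowerSeries.X 1, 𝓕.ix] 𝓕.ser with hG'
  have hGs : PowerSeries.HasSubst G := 𝓕.hasSubst_ser hX0 𝓕.hasSubst_iy
  have hGs' : PowerSeries.HasSubst G' := 𝓕.hasSubst_ser hX1 𝓕.hasSubst_ix
  have hTG : MvPowerSeries.subst ![𝓕.ser, MvPowerSeries.X 1] G = MvPowerSeries.X 0 := by
    have hs : MvPowerSeries.HasSubst ![𝓕.ser, MvPowerSeries.X 1] := 𝓕.subT.hasSubst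
    rw [hG, subst_pair_subst (hasSubst_pair hX0 𝓕.hasSubst_iy) hs, subst_power_subst hX1 hs,
      MvPowerSeries.subst_X hs, MvPowerSeries.subst_X hs]
    exact 𝓕.subst_ser_iy_ser
  have hJG : MvPowerSeries.subst ![𝓕.ix, MvPowerSeries.X 1] G' = 𝓕.ser := by
    have hs : MvPowerSeries.HasSubst ![𝓕.ix, MvPowerSeries.X 1] := 𝓕.subJ.hasSubst
    rw [hG', subst_pair_subst (hasSubst_pair hX1 𝓕.hasSubst_ix) hs, subst_power_subst hX0 hs,
      MvPowerSeries.subst_X hs, MvPowerSeries.subst_X hs]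
    refine Eq.trans ?_ 𝓕.swap_ser
    rw [swap_apply]
    exact congrArg (fun t => MvPowerSeries.subst ![MvPowerSeries.X 1, t] 𝓕.ser) (𝓕.iota_iota hX0)
  have hsw : swap G = G' := by
    rw [hG, swap_subst_pair (hasSubst_pair hX0 𝓕.hasSubst_iy), swap_X0, swap_subst_X1]
  have hT : 𝓕.subT.mon.hom (mono (-N) k 1 * emb G ^ l *
      emb (MvPowerSeries.subst ![MvPowerSeries.X 1, G] g)) = 𝓕.recL N l k (swap g) := by
    have hs := 𝓕.subT.hasSubst
    rw [map_mul, map_mul, map_pow, SubData.hom_mono, SubData.hom_emb, SubData.hom_emb,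
      SubData.B_zpow _ rfl, subst_pair_subst (hasSubst_pair hX1 hGs) hs]
    change _ * emb (MvPowerSeries.subst ![𝓕.ser, MvPowerSeries.X 1] G) ^ l *
      emb (MvPowerSeries.subst ![_, MvPowerSeries.subst ![𝓕.ser, MvPowerSeries.X 1] G] g) = _
    rw [hTG, MvPowerSeries.subst_X hs, emb_X0, mono_one_pow, recL, swap_apply, mono_zero_one,
      one_mul, mul_assoc, mul_assoc, ← mul_assoc (mono _ _ _) (mono _ _ _), mono_mul, mul_assoc]
    simp only [mul_one, mul_zero, zero_add, add_zero]
    rfl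
  have hJ : 𝓕.subJ.mon.hom (mono k (-N) 1 * emb G' ^ l *
      emb (MvPowerSeries.subst ![MvPowerSeries.X 0, G'] g)) = 𝓕.recR N k l g := by
    have hs := 𝓕.subJ.hasSubst
    rw [map_mul, map_mul, map_pow, SubData.hom_mono, SubData.hom_emb, SubData.hom_emb,
      SubData.B_zpow _ rfl, subst_pair_subst (hasSubst_pair hX0 hGs') hs]
    change _ * emb (MvPowerSeries.subst ![𝓕.ix, MvPowerSeries.X 1] G') ^ l *
      emb (MvPowerSeries.subst ![_, MvPowerSeries.subst ![𝓕.ix, MvPowerSeries.X 1] G'] g) = _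
    rw [hJG, MvPowerSeries.subst_X hs, recR, mono_zero_one, one_mul, zpow_natCast,
      Units.val_pow_eq_pow_val, SubData.A_val]
    change _ * emb (MvPowerSeries.subst ![𝓕.ix, 𝓕.ser] g) = emb 𝓕.ser ^ l * _ * _ * _
    ring
  have hSw : Sw (mono (-N) k 1 * emb G ^ l * emb (MvPowerSeries.subst ![MvPowerSeries.X 1, G] g))
      (mono k (-N) 1 * emb G' ^ l * emb (MvPowerSeries.subst ![MvPowerSeries.X 0, G'] g)) := by
    refine ((Sw.mono _ _ _).mul ?_).mul ?_
    · rw [← map_pow, ← map_pow, ← hsw, ← map_pow]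
      exact Sw.emb _
    · have := Sw.emb (MvPowerSeries.subst ![MvPowerSeries.X 1, G] g)
      rwa [swap_subst_pair (hasSubst_pair hX1 hGs), swap_X1, hsw] at this
  rw [← hJ, ← hT, res2_subJ, res2_subT, 𝓕.res2_swap hSw]

theorem res2_recL_natCast (N : ℕ) (k : ℤ) (l : ℕ) (g : MvPowerSeries (Fin 2) R) :
    𝓕.res2 (𝓕.recL N k l g) = 0 :=
  𝓕.res2_eq_zero (mul_mem (mul_mem (𝓕.subT_A_zpow_mem _) (mono_mem_noNegY _ (by omega) _))
    (emb_mem_noNegY _))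

/-- The residue identity behind the Jacobi identity. -/
theorem res2_recL_sub_res2_recL (N : ℕ) (k l : ℤ) (g : MvPowerSeries (Fin 2) R) :
    𝓕.res2 (𝓕.recL N k l g) - 𝓕.res2 (𝓕.recL N l k (swap g)) = 𝓕.res2 (𝓕.recR N k l g) := by
  obtain ⟨c, hc⟩ := 𝓕.exists_ser_eq
  induction N generalizing k l g with
  | zero =>
    have h1 : 𝓕.res2 (𝓕.recR 0 k l g) = 0 :=
      𝓕.res2_eq_zero (mul_mem (mul_mem (mul_mem (𝓕.subT_A_zpow_mem _) (mono_mem_noNegY _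
        (by simp) _)) (𝓕.subJ_A_zpow_mem _)) (emb_mem_noNegY _))
    have h2 : Sw (𝓕.recL 0 k l g) (𝓕.recL 0 l k (swap g)) := by
      simp only [recL, Nat.cast_zero, neg_zero, zpow_zero, Units.val_one, one_mul]
      exact (Sw.mono _ _ _).mul (Sw.emb _)
    rw [h1, 𝓕.res2_swap h2, sub_self]
  | succ N ih =>
    have key : ∀ (d : ℕ) (l : ℤ), -l ≤ d → ∀ (k : ℤ) (g : MvPowerSeries (Fin 2) R),
        𝓕.res2 (𝓕.recL (N + 1) k l g) - 𝓕.res2 (𝓕.recL (N + 1) l k (swap g)) =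
          𝓕.res2 (𝓕.recR (N + 1) k l g) := by
      intro d
      induction d with
      | zero =>
        intro l hl k g
        obtain ⟨l, rfl⟩ := Int.eq_ofNat_of_zero_le (show 0 ≤ l by omega)
        rw [res2_recL_natCast, res2_recR_natCast, zero_sub]
      | succ d ihd =>
        intro l hl k g
        rw [𝓕.recL_succ hc, 𝓕.recL_swap_succ hc, 𝓕.recR_succ hc, res2_sub, res2_sub, res2_sub,
          ← ih, ← ihd (l + 1) (by push_cast at hl; omega)]
        ring
    exact key (-l).toNat l (Int.self_le_toNat _) k g

end FormalGroupLaw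

end Reciprocity

noncomputable section BaseChange

universe u v

section Maps

variable {R S : Type*} [CommRing R] [CommRing S] {φ : R →+* S}

theorem map_finsum_of_injective {ι : Type*} (hφ : Function.Injective φ) (f : ι → R) :
    φ (∑ᶠ i, f i) = ∑ᶠ i, φ (f i) :=
  AddMonoidHom.map_finsum_of_injective φ.toAddMonoidHom hφ f

theorem map_oneS (n : ℤ) : φ (oneS R n) = oneS S n := by
  rw [oneS, oneS, apply_ite φ, map_one, map_zero]

theorem map_oneS2 (i j : ℤ) : φ (oneS2 R i j) = oneS2 S i j := by
  rw [oneS2, oneS2, apply_ite φ, map_one, map_zero]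

theorem map_pow1 (hφ : Function.Injective φ) (f : ℤ → R) (k : ℕ) (n : ℤ) :
    φ (pow1 f k n) = pow1 (fun i => φ (f i)) k n := by
  induction k generalizing n with
  | zero => exact map_oneS n
  | succ k ih =>
    rw [pow1, mulS, map_finsum_of_injective hφ, pow1, mulS]
    simp only [smul_eq_mul, map_mul, ih]

theorem map_pow2 (hφ : Function.Injective φ) (f : ℤ → ℤ → R) (k : ℕ) (i j : ℤ) :
    φ (pow2 f k i j) = pow2 (fun i j => φ (f i j)) k i j := by
  induction k generalizing i j with
  | zero => exact map_oneS2 i j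
  | succ k ih =>
    rw [pow2, mulS2, map_finsum_of_injective hφ, pow2, mulS2]
    simp only [smul_eq_mul, map_mul, ih]

theorem map_izwPow (hφ : Function.Injective φ) (G : ℤ → ℤ → R) (n i j : ℤ) :
    φ (izwPow G n i j) = izwPow (fun i j => φ (G i j)) n i j := by
  rw [izwPow, map_finsum_of_injective hφ, izwPow]
  refine finsum_congr fun k => ?_
  rw [map_mul, map_intCast, map_pow2 hφ]
  congr 2
  funext i j
  rw [hzS, map_sub, map_oneS2]
  rfl

theorem map_iotaPow (hφ : Function.Injective φ) (f : ℤ → R) (n i : ℤ) :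
    φ (iotaPow f n i) = iotaPow (fun i => φ (f i)) n i := by
  rw [iotaPow, map_mul, map_intCast, map_finsum_of_injective hφ, iotaPow]
  congr 1
  refine finsum_congr fun k => ?_
  rw [map_mul, map_intCast, map_pow1 hφ]
  congr 2
  funext i
  rw [hS, map_sub, map_neg, map_oneS]
  rfl

theorem map_invOne (hφ : Function.Injective φ) (f : ℤ → R) (i : ℤ) :
    φ (invOne f i) = invOne (fun i => φ (f i)) i := by
  rw [invOne, map_finsum_of_injective hφ, invOne]
  refine finsum_congr fun k => ?_
  rw [map_mul, map_pow, map_neg, map_one, map_pow1 hφ]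
  congr 2
  funext i
  rw [hOneS, map_sub, map_oneS]
  rfl

end Maps

/-- The formal group law obtained by an injective change of rings. -/
def FormalGroupLaw.map {R S : Type*} [CommRing R] [CommRing S] (𝓕 : FormalGroupLaw R) (φ : R →+* S)
    (hφ : Function.Injective φ) : FormalGroupLaw S where
  F i j := φ (𝓕.F i j)
  F_supp i j h := by rw [𝓕.F_supp i j h, map_zero]
  F_modw i := by rw [𝓕.F_modw, apply_ite φ, map_one, map_zero]
  F_comm i j := by rw [𝓕.F_comm]
  F_assoc a b c := by
    have h := congrArg φ (𝓕.F_assoc a b c)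
    rw [map_finsum_of_injective hφ, map_finsum_of_injective hφ] at h
    simpa only [map_mul, map_pow2 hφ] using h
  inv i := φ (𝓕.inv i)
  inv_supp i h := by rw [𝓕.inv_supp i h, map_zero]
  inv_one := by rw [𝓕.inv_one, map_neg, map_one]
  inv_eq n := by
    have h := congrArg φ (𝓕.inv_eq n)
    rw [map_finsum_of_injective hφ, map_zero] at h
    simpa only [map_mul, map_pow1 hφ] using h

/-- An embedding of an `R`-module into a commutative ring `S`, semilinear over `φ : R → S`. -/
structure ModuleEmbedding (R M S : Type*) [CommRing R] [AddCommGroup M] [Module R M]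
    [CommRing S] where
  φ : R →+* S
  φ_injective : Function.Injective φ
  e : M →+ S
  e_injective : Function.Injective e
  e_smul : ∀ (r : R) (v : M), e (r • v) = φ r * e v

theorem exists_moduleEmbedding (R : Type u) (M : Type v) [CommRing R] [AddCommGroup M]
    [Module R M] : ∃ (S : Type max u v) (_ : CommRing S), Nonempty (ModuleEmbedding R M S) := by
  let _ : Module Rᵐᵒᵖ M := Module.compHom M ((RingHom.id R).fromOpposite mul_comm)
  have : IsCentralScalar R M := ⟨fun _ _ => rfl⟩
  exact ⟨TrivSqZeroExt R M, inferInstance, ⟨{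
    φ := TrivSqZeroExt.inlHom R M
    φ_injective := TrivSqZeroExt.inl_injective
    e := (TrivSqZeroExt.inrHom R M).toAddMonoidHom
    e_injective := TrivSqZeroExt.inr_injective
    e_smul := fun r v => (TrivSqZeroExt.inl_mul_inr r v).symm }⟩⟩

namespace ModuleEmbedding

variable {R M S : Type*} [CommRing R] [AddCommGroup M] [Module R M] [CommRing S]
  (E : ModuleEmbedding R M S) (𝓕 : FormalGroupLaw R)

/-- The formal group law over the larger ring. -/
abbrev law : FormalGroupLaw S := 𝓕.map E.φ E.φ_injective

theorem e_finsum {ι : Type*} (f : ι → M) : E.e (∑ᶠ i, f i) = ∑ᶠ i, E.e (f i) :=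
  AddMonoidHom.map_finsum_of_injective E.e E.e_injective f

theorem law_izwPow (n i j : ℤ) : izwPow (E.law 𝓕).F n i j = E.φ (izwPow 𝓕.F n i j) :=
  (map_izwPow E.φ_injective _ _ _ _).symm

theorem law_iotaPow (n i : ℤ) : iotaPow (E.law 𝓕).inv n i = E.φ (iotaPow 𝓕.inv n i) :=
  (map_iotaPow E.φ_injective _ _ _).symm

theorem law_pow2 (n : ℕ) (i j : ℤ) : pow2 (E.law 𝓕).F n i j = E.φ (pow2 𝓕.F n i j) :=
  (map_pow2 E.φ_injective _ _ _ _).symm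

theorem law_pF (i : ℤ) : (E.law 𝓕).pF i = E.φ (𝓕.pF i) := (map_invOne E.φ_injective _ _).symm

theorem e_resF (f : ℤ → M) : E.e (𝓕.resF f) = ∑ᶠ i : ℤ, (E.law 𝓕).pF i * E.e (f (-1 - i)) := by
  rw [FormalGroupLaw.resF, e_finsum]
  simp only [e_smul, law_pF]

theorem e_mulS2 (f : ℤ → ℤ → R) (g : ℤ → ℤ → M) (i j : ℤ) :
    E.e (mulS2 f g i j) = mulS2 (fun i j => E.φ (f i j)) (fun i j => E.e (g i j)) i j := by
  rw [mulS2, e_finsum, mulS2]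
  simp only [e_smul, smul_eq_mul]

theorem e_substF (c : ℤ → M) (k n : ℤ) :
    E.e (substF 𝓕 c k n) = ∑ᶠ m : ℤ, izwPow (E.law 𝓕).F m k n * E.e (c m) := by
  rw [substF, e_finsum]
  simp only [e_smul, law_izwPow]

end ModuleEmbedding

namespace FormalGroupLaw

variable {R : Type*} [CommRing R] (𝓕 : FormalGroupLaw R)

theorem co_mul_px (f : LaurentXY R) (i j : ℤ) :
    co (f * 𝓕.px) i j = ∑ᶠ k : ℤ, 𝓕.pF k * co f (i - k) j := by
  rw [mul_comm, co_mul, mulS2, finsum_eq_comp_of_injective (e := fun k : ℤ => (k, (0 : ℤ)))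
    (fun _ _ h => (Prod.mk.inj h).1)]
  · refine finsum_congr fun k => ?_
    rw [co_px, if_pos rfl, smul_eq_mul, sub_zero]
  · rintro ⟨k, l⟩ h
    rw [co_px, if_neg (fun hl => h ⟨k, by rw [← hl]⟩), zero_smul]

theorem co_mul_py (f : LaurentXY R) (i j : ℤ) :
    co (f * 𝓕.py) i j = ∑ᶠ k : ℤ, 𝓕.pF k * co f i (j - k) := by
  rw [mul_comm, co_mul, mulS2, finsum_eq_comp_of_injective (e := fun k : ℤ => ((0 : ℤ), k))
    (fun _ _ h => (Prod.mk.inj h).2)]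
  · refine finsum_congr fun k => ?_
    rw [co_py, if_pos rfl, smul_eq_mul, sub_zero]
  · rintro ⟨k, l⟩ h
    rw [co_py, if_neg (fun hl => h ⟨l, by rw [← hl]⟩), zero_smul]

theorem res2_eq_finsum (f : LaurentXY R) : 𝓕.res2 f =
    ∑ᶠ i : ℤ, 𝓕.pF i * ∑ᶠ j : ℤ, 𝓕.pF j * co f (-1 - i) (-1 - j) := by
  rw [res2, mul_right_comm, co_mul_px]
  simp only [co_mul_py]

theorem co_subS_B_zpow (n i j : ℤ) :
    co (↑(𝓕.subS.B ^ n) : LaurentXY R) i j = if i = 0 then iotaPow 𝓕.inv n j else 0 := by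
  have h : 𝓕.subS.B = Units.map (inY (R := R) : HahnSeries ℤ R →* LaurentXY R) 𝓕.iotaLead.unit := by
    refine Units.ext ?_
    rw [SubData.B_val, Units.coe_map, iotaLead_unit]
    exact emb_subst_X1 _
  rw [h, ← map_zpow, Units.coe_map]
  change co (inY _) i j = _
  rw [co_inY, coeff_iotaLead_zpow]

theorem subS_A : 𝓕.subS.A = 𝓕.subT.A := Units.ext (by rw [SubData.A_val, SubData.A_val]; rfl)

theorem sw_iota_zpow (n : ℤ) :
    Sw (↑(𝓕.subS.B ^ n) : LaurentXY R) (↑(𝓕.subJ.A ^ n) : LaurentXY R) := fun i j => by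
  rw [co_subS_B_zpow, co_subJ_zpow]

/-- The coefficients of a substitution. -/
theorem co_hom (s : SubData R) (f : LaurentXY R) (i j : ℤ) :
    co (s.mon.hom f) i j = ∑ᶠ p : ℤ × ℤ, co f p.1 p.2 *
      co ((↑(s.A ^ p.1) : LaurentXY R) * (↑(s.B ^ p.2) : LaurentXY R)) i j := by
  change (s.mon.ap f).coeff _ = _
  rw [s.mon.coeff_ap]
  exact (finsum_eq_of_bijective xyEquiv xyEquiv.bijective fun p => rfl).symm

theorem co_subT_hom (f : LaurentXY R) (i j : ℤ) : co (𝓕.subT.mon.hom f) i j =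
    ∑ᶠ p : ℤ × ℤ, co f p.1 p.2 * izwPow 𝓕.F p.1 i (j - p.2) := by
  rw [co_hom]
  refine finsum_congr fun p => ?_
  rw [SubData.B_zpow _ rfl, mul_comm (Units.val _), co_mono_mul, co_subT_zpow, sub_zero, one_mul]

theorem finite_subT_hom (f : LaurentXY R) (i j : ℤ) :
    (fun p : ℤ × ℤ => co f p.1 p.2 * izwPow 𝓕.F p.1 i (j - p.2)).HasFiniteSupport := by
  have h := (𝓕.subT.mon.coeff_ap_hasFiniteSupport f (xy i j)).preimage
    (f := xyEquiv) (xyEquiv.injective.injOn)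
  refine h.subset fun p hp => ?_
  refine fun h0 => hp ?_
  refine Eq.trans ?_ h0
  change _ = f.coeff (xy p.1 p.2) * (𝓕.subT.mon.img (xy p.1 p.2)).coeff (xy i j)
  rw [SubData.img_xy, SubData.B_zpow _ rfl, mul_comm (Units.val _)]
  change _ = _ * co (mono _ _ _ * _) i j
  rw [co_mono_mul, co_subT_zpow, sub_zero, one_mul]
  rfl

theorem co_subS_mon (m n i j : ℤ) :
    co ((↑(𝓕.subS.A ^ m) : LaurentXY R) * (↑(𝓕.subS.B ^ n) : LaurentXY R)) i j =
      ∑ᶠ k : ℤ, izwPow 𝓕.F m i k * iotaPow 𝓕.inv n (j - k) := by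
  rw [co_mul, mulS2, finsum_eq_comp_of_injective (e := fun k : ℤ => (i, k))
    (fun _ _ h => (Prod.mk.inj h).2)]
  · refine finsum_congr fun k => ?_
    rw [subS_A, co_subT_zpow, co_subS_B_zpow, if_pos (sub_self i), smul_eq_mul]
  · rintro ⟨k, l⟩ h
    rw [co_subS_B_zpow, if_neg (fun hl => h ⟨l, Prod.ext (sub_eq_zero.mp hl) rfl⟩), smul_zero]

theorem co_subJ_hom (f : LaurentXY R) (i j : ℤ) : co (𝓕.subJ.mon.hom f) i j =
    ∑ᶠ p : ℤ × ℤ, co f p.1 p.2 * (if j = p.2 then iotaPow 𝓕.inv p.1 i else 0) := by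
  rw [co_hom]
  refine finsum_congr fun p => ?_
  rw [SubData.B_zpow _ rfl, mul_comm (Units.val _), co_mono_mul, co_subJ_zpow, sub_zero, one_mul]
  simp only [sub_eq_zero]

theorem iotaPow_eq_zero {n i : ℤ} (h : i < n) : iotaPow 𝓕.inv n i = 0 := by
  rw [← coeff_iotaLead_zpow, LeadUnit.unit_zpow]
  change (HahnSeries.single (n • (1 : ℤ)) (_ : R) * _ : HahnSeries ℤ R).coeff i = 0
  rw [HahnSeries.coeff_single_mul]
  by_contra hne
  have hmem := zpow_support_subset_closure _ 𝓕.iotaLead.pos n (right_ne_zero_of_mul hne)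
  have key : ∀ γ ∈ AddSubmonoid.closure 𝓕.iotaLead.h.support, 0 ≤ γ := by
    intro γ hγ
    induction hγ using AddSubmonoid.closure_induction with
    | mem γ hγ =>
      by_contra! hlt
      exact hγ (HahnSeries.coeff_eq_zero_of_lt_orderTop
        (lt_trans (by exact_mod_cast hlt) 𝓕.iotaLead.pos))
    | zero => exact le_rfl
    | add a b _ _ ha hb => exact add_nonneg ha hb
  have := key _ hmem
  simp only [smul_eq_mul, mul_one] at this
  omega

theorem izwPow_eq_zero {m i j : ℤ} (h : j < 0) : izwPow 𝓕.F m i j = 0 := by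
  rw [← co_subT_zpow]
  exact 𝓕.subT_A_zpow_mem m i j h

theorem pF_eq_zero {i : ℤ} (h : i < 0) : 𝓕.pF i = 0 := by
  have := 𝓕.co_px i 0
  rw [if_pos rfl] at this
  rw [← this, px, co_emb, if_neg (by omega)]

end FormalGroupLaw

end BaseChange

noncomputable section ResidueBracket

namespace ModuleEmbedding

variable {R M S : Type*} [CommRing R] [AddCommGroup M] [Module R M] [CommRing S]
  (E : ModuleEmbedding R M S) (𝓕 : FormalGroupLaw R)

/-- A module-valued Laurent series, viewed as a Laurent series in `x`. -/
def serX (c : ℤ → M) (hc : IsLaurent c) : LaurentXY S :=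
  ofCo (fun i j => if j = 0 then E.e (c i) else 0) ⟨0, fun j hj i => if_neg hj.ne⟩ fun j => by
    obtain ⟨N, hN⟩ := hc
    exact ⟨N, fun i hi => by rw [hN i hi, map_zero, ite_self]⟩

theorem co_serX (c : ℤ → M) (hc : IsLaurent c) (i j : ℤ) :
    co (E.serX c hc) i j = if j = 0 then E.e (c i) else 0 := rfl

theorem finsum_co_serX_mul (c : ℤ → M) (hc : IsLaurent c) (g : ℤ → ℤ → S) :
    ∑ᶠ p : ℤ × ℤ, co (E.serX c hc) p.1 p.2 * g p.1 p.2 = ∑ᶠ m : ℤ, g m 0 * E.e (c m) := by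
  rw [finsum_eq_comp_of_injective (e := fun m : ℤ => (m, (0 : ℤ))) (fun _ _ h => (Prod.mk.inj h).1)]
  · refine finsum_congr fun m => ?_
    rw [co_serX, if_pos rfl, mul_comm]
  · rintro ⟨m, l⟩ h
    rw [co_serX, if_neg (fun hl => h ⟨m, Prod.ext rfl hl.symm⟩), zero_mul]

theorem co_subT_serX (c : ℤ → M) (hc : IsLaurent c) (i j : ℤ) :
    co ((E.law 𝓕).subT.mon.hom (E.serX c hc)) i j = E.e (substF 𝓕 c i j) := by
  rw [FormalGroupLaw.co_subT_hom,
    E.finsum_co_serX_mul c hc (fun m l => izwPow (E.law 𝓕).F m i (j - l)), sub_zero, e_substF]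

theorem co_subJ_serX (c : ℤ → M) (hc : IsLaurent c) (i : ℤ) :
    co ((E.law 𝓕).subJ.mon.hom (E.serX c hc)) i 0 =
      E.e (∑ᶠ m : ℤ, iotaPow 𝓕.inv m i • c m) := by
  rw [FormalGroupLaw.co_subJ_hom,
    E.finsum_co_serX_mul c hc (fun m l => if 0 = l then iotaPow (E.law 𝓕).inv m i else 0), e_finsum]
  simp only [e_smul, law_iotaPow, if_true]

end ModuleEmbedding

namespace FormalGroupLaw

variable {R M : Type*} [CommRing R] [AddCommGroup M] [Module R M] (𝓕 : FormalGroupLaw R)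

/-- The residue is invariant under translation. -/
theorem resF_substF {c : ℤ → M} (hc : IsLaurent c) {n : ℤ} (hn : n ≠ 0) :
    𝓕.resF (fun k => substF 𝓕 c k n) = 0 := by
  obtain ⟨S, _, ⟨E⟩⟩ := exists_moduleEmbedding R M
  refine E.e_injective ?_
  rw [E.e_resF, map_zero]
  simp only [← E.co_subT_serX 𝓕 c hc]
  rw [← co_mul_px, residue_subT, co_mul_px]
  simp only [E.co_serX, if_neg hn, mul_zero, finsum_zero]

/-- The residue changes sign under inversion. -/
theorem resF_iota {c : ℤ → M} (hc : IsLaurent c) :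
    𝓕.resF (fun k => ∑ᶠ m : ℤ, iotaPow 𝓕.inv m k • c m) = - 𝓕.resF c := by
  obtain ⟨S, _, ⟨E⟩⟩ := exists_moduleEmbedding R M
  refine E.e_injective ?_
  rw [E.e_resF, map_neg, E.e_resF]
  simp only [← E.co_subJ_serX 𝓕 c hc]
  rw [← co_mul_px, residue_subJ, co_mul_px]
  simp only [E.co_serX, if_true]

theorem finite_resF {c : ℤ → M} (hc : IsLaurent c) :
    (fun i : ℤ => 𝓕.pF i • c (-1 - i)).HasFiniteSupport := by
  obtain ⟨N, hN⟩ := hc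
  refine (Set.finite_Icc 0 (-1 - N)).subset fun i hi => ?_
  by_contra h
  refine hi ?_
  by_cases h0 : i < 0
  · exact (congrArg (· • c (-1 - i)) (𝓕.pF_eq_zero h0)).trans (zero_smul _ _)
  · rw [Set.mem_Icc] at h
    exact (congrArg (𝓕.pF i • ·) (hN (-1 - i) (by omega))).trans (smul_zero _)

theorem map_resF {M' : Type*} [AddCommGroup M'] [Module R M'] (L : M →ₗ[R] M') {c : ℤ → M}
    (hc : IsLaurent c) : L (𝓕.resF c) = 𝓕.resF (fun i => L (c i)) := by
  rw [resF, ← LinearMap.toAddMonoidHom_coe, AddMonoidHom.map_finsum _ (𝓕.finite_resF hc), resF]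
  simp

theorem resF_add {c d : ℤ → M} (hc : IsLaurent c) (hd : IsLaurent d) :
    𝓕.resF (c + d) = 𝓕.resF c + 𝓕.resF d := by
  rw [resF, resF, resF, ← finsum_add_distrib (𝓕.finite_resF hc) (𝓕.finite_resF hd)]
  simp

theorem resF_smul (r : R) {c : ℤ → M} (hc : IsLaurent c) : 𝓕.resF (r • c) = r • 𝓕.resF c :=
  (𝓕.map_resF (r • LinearMap.id) hc).symm

end FormalGroupLaw

namespace VertexFAlgebra

variable {R V : Type*} [CommRing R] {𝓕 : FormalGroupLaw R} [AddCommGroup V] [Module R V]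
  (A : VertexFAlgebra R 𝓕 V)

/-- The bracket `Res^F Y(a,z)b dz`. -/
def bracket : V →ₗ[R] V →ₗ[R] V :=
  LinearMap.mk₂ R (fun a b => 𝓕.resF (A.Y a b))
    (fun a a' b => by
      rw [map_add, LinearMap.add_apply, 𝓕.resF_add (A.Y_laurent _ _) (A.Y_laurent _ _)])
    (fun r a b => by rw [map_smul, LinearMap.smul_apply, 𝓕.resF_smul r (A.Y_laurent _ _)])
    (fun a b b' => by rw [map_add, 𝓕.resF_add (A.Y_laurent _ _) (A.Y_laurent _ _)])
    (fun r a b => by rw [map_smul, 𝓕.resF_smul r (A.Y_laurent _ _)])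

theorem bracket_apply (a b : V) : A.bracket a b = 𝓕.resF (A.Y a b) := rfl

theorem bracket_S {n : ℕ} (hn : 1 ≤ n) (a b : V) : A.bracket (A.S n a) b = 0 := by
  rw [bracket_apply]
  have : A.Y (A.S n a) b = fun k => substF 𝓕 (A.Y a b) k n := funext fun k => A.translation a b k n
  rw [this]
  exact 𝓕.resF_substF (A.Y_laurent a b) (by omega)

theorem finite_skew (a b : V) (k : ℤ) : (fun q : ℕ × ℤ =>
    iotaPow 𝓕.inv q.2 (k - (q.1 : ℤ)) • A.S q.1 (A.Y b a q.2)).HasFiniteSupport := by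
  obtain ⟨N, hN⟩ := A.Y_laurent b a
  refine ((Set.finite_Iic (k - N).toNat).prod (Set.finite_Icc N k)).subset fun q hq => ?_
  have h1 : N ≤ q.2 := by
    by_contra! h
    refine hq ?_
    change _ • A.S q.1 (A.Y b a q.2) = 0
    rw [hN _ h, map_zero, smul_zero]
  have h2 : q.2 ≤ k - q.1 := by
    by_contra! h
    refine hq ?_
    change iotaPow 𝓕.inv q.2 (k - q.1) • _ = _
    rw [𝓕.iotaPow_eq_zero h, zero_smul]
  refine ⟨?_, ?_⟩
  · rw [Set.mem_Iic]; omega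
  · rw [Set.mem_Icc]; omega

theorem map_skew {M : Type*} [AddCommGroup M] [Module R M] (L : V →ₗ[R] M) (a b : V) (k : ℤ) :
    L (A.Y a b k) =
      ∑ᶠ q : ℕ × ℤ, iotaPow 𝓕.inv q.2 (k - (q.1 : ℤ)) • L (A.S q.1 (A.Y b a q.2)) := by
  rw [A.skew, ← LinearMap.toAddMonoidHom_coe, AddMonoidHom.map_finsum _ (A.finite_skew a b k)]
  simp

theorem map_bracket_skew {M : Type*} [AddCommGroup M] [Module R M] (L : V →ₗ[R] M)
    (hL : ∀ (n : ℕ), 1 ≤ n → ∀ v, L (A.S n v) = 0) (a b : V) :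
    L (A.bracket a b) = - L (A.bracket b a) := by
  have hc : IsLaurent fun m => L (A.Y b a m) := by
    obtain ⟨N, hN⟩ := A.Y_laurent b a
    exact ⟨N, fun n hn => by
      change L (A.Y b a n) = 0
      rw [hN n hn, map_zero]⟩
  rw [bracket_apply, bracket_apply, 𝓕.map_resF L (A.Y_laurent _ _),
    𝓕.map_resF L (A.Y_laurent _ _), ← 𝓕.resF_iota hc]
  congr 1
  funext k
  rw [A.map_skew, finsum_eq_comp_of_injective (e := fun m : ℤ => (0, m))
    (fun _ _ h => (Prod.mk.inj h).2)]
  · simp [A.S_zero]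
  · rintro ⟨n, m⟩ h
    have hn : 1 ≤ n := by
      by_contra! hlt
      exact h ⟨m, Prod.ext (by simp only; omega) rfl⟩
    rw [hL n hn, smul_zero]

end VertexFAlgebra

end ResidueBracket

noncomputable section Jacobi

/-- Two series related by exchanging the variables have bounded poles in both variables. -/
theorem exists_eq_mono_mul_emb {R : Type*} [CommRing R] {f f' : LaurentXY R} (h : Sw f f') :
    ∃ (k l : ℤ) (g : MvPowerSeries (Fin 2) R),
      f' = mono k l 1 * emb g ∧ f = mono l k 1 * emb (swap g) := by
  obtain ⟨l, hl⟩ := exists_bound_y f'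
  obtain ⟨k, hk⟩ := exists_bound_y f
  let g : MvPowerSeries (Fin 2) R := fun d => co f' (d 0 + k) (d 1 + l)
  have hf' : f' = mono k l 1 * emb g := by
    refine co_ext fun i j => ?_
    rw [co_mono_mul, one_mul]
    by_cases hij : 0 ≤ i - k ∧ 0 ≤ j - l
    · obtain ⟨m, hm⟩ := Int.eq_ofNat_of_zero_le hij.1
      obtain ⟨n, hn⟩ := Int.eq_ofNat_of_zero_le hij.2
      rw [hm, hn, co_emb_natCast]
      change _ = co f' (exp2 m n 0 + k) (exp2 m n 1 + l)
      rw [exp2_zero, exp2_one, ← hm, ← hn, sub_add_cancel, sub_add_cancel]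
    · rw [co_emb, if_neg hij]
      by_cases hi : i < k
      · rw [← h, hk i hi]
      · exact hl j (by omega) i
  refine ⟨k, l, g, hf', h.symm.unique ?_⟩
  have := (Sw.mono k l (1 : R)).mul (Sw.emb g)
  rwa [← hf'] at this

theorem ModuleEmbedding.finite_substF {R M S : Type*} [CommRing R] [AddCommGroup M] [Module R M]
    [CommRing S] (E : ModuleEmbedding R M S) (𝓕 : FormalGroupLaw R) {c : ℤ → M} (hc : IsLaurent c)
    (k n : ℤ) : (fun m : ℤ => izwPow (E.law 𝓕).F m k n * E.e (c m)).HasFiniteSupport := by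
  refine (((E.law 𝓕).finite_subT_hom (E.serX c hc) k n).preimage
    (f := fun m : ℤ => (m, (0 : ℤ))) (fun _ _ _ _ h => (Prod.mk.inj h).1)).subset fun m hm => ?_
  change co (E.serX c hc) m 0 * izwPow (E.law 𝓕).F m k (n - 0) ≠ 0
  rw [E.co_serX, if_pos rfl, sub_zero, mul_comm]
  exact hm

namespace VertexFAlgebra

variable {R V S : Type*} [CommRing R] {𝓕 : FormalGroupLaw R} [AddCommGroup V] [Module R V]
  [CommRing S] (A : VertexFAlgebra R 𝓕 V) (E : ModuleEmbedding R V S) (a b c : V)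

/-- The series `Y(Y(a,y)b,x)c`. -/
def iterSer : LaurentXY S :=
  ofCo (fun i j => E.e (A.Y (A.Y a b j) c i))
    (by
      obtain ⟨N, hN⟩ := A.Y_laurent a b
      exact ⟨N, fun j hj i => by
        rw [hN j hj, map_zero, LinearMap.zero_apply, Pi.zero_apply, map_zero]⟩)
    (fun j => by
      obtain ⟨N, hN⟩ := A.Y_laurent (A.Y a b j) c
      exact ⟨N, fun i hi => by rw [hN i hi, map_zero]⟩)

/-- The series `Y(a,x)Y(b,y)c`. -/
def prodSer : LaurentXY S :=
  ofCo (fun i j => E.e (A.Y a (A.Y b c j) i))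
    (by
      obtain ⟨N, hN⟩ := A.Y_laurent b c
      exact ⟨N, fun j hj i => by rw [hN j hj, map_zero, Pi.zero_apply, map_zero]⟩)
    (fun j => by
      obtain ⟨N, hN⟩ := A.Y_laurent a (A.Y b c j)
      exact ⟨N, fun i hi => by rw [hN i hi, map_zero]⟩)

/-- The series `Y(a,F(x,y))Y(b,y)c`. -/
def transSer : LaurentXY S := (E.law 𝓕).subT.mon.hom (A.prodSer E a b c)

theorem co_iterSer (i j : ℤ) : co (A.iterSer E a b c) i j = E.e (A.Y (A.Y a b j) c i) := rfl

theorem co_prodSer (i j : ℤ) : co (A.prodSer E a b c) i j = E.e (A.Y a (A.Y b c j) i) := rfl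

theorem co_transSer (i j : ℤ) :
    co (A.transSer E a b c) i j = E.e (substFProd 𝓕 (fun v => A.Y a v) (A.Y b c) i j) := by
  rw [transSer, FormalGroupLaw.co_subT_hom, substFProd, E.e_finsum]
  refine finsum_congr fun p => ?_
  rw [co_prodSer, E.e_smul, E.law_izwPow, mul_comm]

theorem res2_iterSer :
    (E.law 𝓕).res2 (A.iterSer E a b c) = E.e (A.bracket (A.bracket a b) c) := by
  rw [FormalGroupLaw.res2_eq_finsum, bracket_apply _ _ c, E.e_resF]
  refine finsum_congr fun i => ?_
  have h := 𝓕.map_resF ((LinearMap.proj (-1 - i)).comp (A.Y.flip c)) (A.Y_laurent a b)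
  congr 1
  refine Eq.trans ?_ (congrArg E.e h).symm
  rw [E.e_resF]
  rfl

theorem res2_prodSer :
    (E.law 𝓕).res2 (A.prodSer E a b c) = E.e (A.bracket a (A.bracket b c)) := by
  rw [FormalGroupLaw.res2_eq_finsum, bracket_apply _ a, E.e_resF]
  refine finsum_congr fun i => ?_
  have h := 𝓕.map_resF ((LinearMap.proj (-1 - i)).comp (A.Y a)) (A.Y_laurent b c)
  congr 1
  refine Eq.trans ?_ (congrArg E.e h).symm
  rw [E.e_resF]
  rfl

theorem res2_transSer :
    (E.law 𝓕).res2 (A.transSer E a b c) = E.e (A.bracket a (A.bracket b c)) := by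
  rw [transSer, FormalGroupLaw.res2_subT, res2_prodSer]

/-- Weak associativity. -/
theorem exists_sw : ∃ N : ℕ, Sw (emb ((E.law 𝓕).ser ^ N) * A.iterSer E a b c)
    (emb ((E.law 𝓕).ser ^ N) * A.transSer E a b c) := by
  obtain ⟨N, hN⟩ := A.weak_assoc a b c
  refine ⟨N, fun i j => ?_⟩
  have h := congrArg E.e (congrFun (congrFun hN j) i)
  rw [E.e_mulS2, E.e_mulS2] at h
  rw [co_mul, co_mul]
  have h2 : co (emb ((E.law 𝓕).ser ^ N)) = fun i j => E.φ (pow2 𝓕.F N i j) := by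
    funext i j
    rw [← FormalGroupLaw.pow2_F, E.law_pow2]
  have h3 : co (A.transSer E a b c) =
      fun i j => E.e (substFProd 𝓕 (fun v => A.Y a v) (A.Y b c) i j) := by
    funext i j
    rw [co_transSer]
  rw [h3, h2, ← h, ← h2, mulS2, mulS2]
  refine finsum_eq_of_bijective _ (Equiv.prodComm ℤ ℤ).bijective fun p => ?_
  have hs := Sw.emb ((E.law 𝓕).ser ^ N) p.1 p.2
  rw [map_pow swap, FormalGroupLaw.swap_ser] at hs
  rw [hs]
  rfl

/-- Skew symmetry inside an iterated field. -/
theorem iterSer_skew : A.iterSer E b a c = (E.law 𝓕).subS.mon.hom (A.iterSer E a b c) := by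
  refine co_ext fun l k => ?_
  let U : (ℤ × ℤ) × ℤ → S := fun x => iotaPow (E.law 𝓕).inv x.1.2 (k - x.1.1) *
    (izwPow (E.law 𝓕).F x.2 l x.1.1 * E.e (A.Y (A.Y a b x.1.2) c x.2))
  have hU : U.HasFiniteSupport := by
    obtain ⟨N, hN⟩ := A.Y_laurent a b
    refine (((Set.finite_Icc 0 (k - N)).prod (Set.finite_Icc N k)).biUnion fun p _ =>
      (E.finite_substF 𝓕 (A.Y_laurent (A.Y a b p.2) c) l p.1).image (Prod.mk p)).subset ?_
    rintro ⟨⟨t, s⟩, m⟩ hx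
    have h1 : N ≤ s := by
      by_contra! h
      refine hx ?_
      change _ * (_ * E.e (A.Y (A.Y a b s) c m)) = 0
      rw [hN s h, map_zero, LinearMap.zero_apply, Pi.zero_apply, map_zero, mul_zero, mul_zero]
    have h2 : s ≤ k - t := by
      by_contra! h
      exact hx (mul_eq_zero_of_left ((E.law 𝓕).iotaPow_eq_zero h) _)
    have h3 : 0 ≤ t := by
      by_contra! h
      exact hx (mul_eq_zero_of_right _ (mul_eq_zero_of_left ((E.law 𝓕).izwPow_eq_zero h) _))
    refine Set.mem_biUnion (x := (t, s)) ⟨⟨h3, ?_⟩, ⟨h1, ?_⟩⟩ ⟨m, right_ne_zero_of_mul hx, rfl⟩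
    · change t ≤ k - N
      omega
    · change s ≤ k
      omega
  let σ : (ℤ × ℤ) × ℤ ≃ (ℤ × ℤ) × ℤ :=
    ⟨fun x => ((x.2, x.1.2), x.1.1), fun x => ((x.2, x.1.2), x.1.1), fun _ => rfl, fun _ => rfl⟩
  have h1 : co (A.iterSer E b a c) l k = ∑ᶠ p : ℤ × ℤ, ∑ᶠ m : ℤ, U (p, m) := by
    rw [co_iterSer]
    have h := A.map_skew ((LinearMap.proj l).comp (A.Y.flip c)) b a k
    refine (congrArg E.e h).trans ?_
    rw [E.e_finsum, finsum_eq_comp_of_injective (e := fun q : ℕ × ℤ => ((q.1 : ℤ), q.2))]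
    · refine finsum_congr fun q => ?_
      rw [E.e_smul]
      change _ * E.e (A.Y (A.S q.1 (A.Y a b q.2)) c l) = _
      rw [A.translation, E.e_substF, ← E.law_iotaPow,
        mul_finsum' _ _ (E.finite_substF 𝓕 (A.Y_laurent (A.Y a b q.2) c) l q.1)]
    · rintro ⟨n, s⟩ ⟨n', s'⟩ h
      simpa using h
    · rintro ⟨t, s⟩ h
      have ht : t < 0 := by
        by_contra! h0
        exact h ⟨(t.toNat, s), Prod.ext (Int.toNat_of_nonneg h0) rfl⟩
      refine (finsum_congr fun m => ?_).trans finsum_zero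
      exact mul_eq_zero_of_right _ (mul_eq_zero_of_left ((E.law 𝓕).izwPow_eq_zero ht) _)
  rw [h1, ← finsum_curry U hU, ← finsum_comp_equiv σ,
    finsum_curry _ (hU.preimage σ.injective.injOn), FormalGroupLaw.co_hom]
  refine finsum_congr fun p => ?_
  rw [FormalGroupLaw.co_subS_mon, mul_finsum']
  · refine finsum_congr fun t => ?_
    change iotaPow _ p.2 (k - t) * (izwPow _ p.1 l t * E.e (A.Y (A.Y a b p.2) c p.1)) = _
    rw [co_iterSer]
    ring
  · refine (Set.finite_Icc 0 (k - p.2)).subset fun t ht => ?_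
    by_contra h
    refine ht ?_
    by_cases h0 : t < 0
    · exact mul_eq_zero_of_left ((E.law 𝓕).izwPow_eq_zero h0) _
    · rw [Set.mem_Icc] at h
      exact mul_eq_zero_of_right _ ((E.law 𝓕).iotaPow_eq_zero (by omega))

theorem transSer_swap {N : ℕ} {k l : ℤ} {g : MvPowerSeries (Fin 2) S}
    (h : emb ((E.law 𝓕).ser ^ N) * A.iterSer E a b c = mono l k 1 * emb (swap g)) :
    A.transSer E b a c = (E.law 𝓕).recR N k l g := by
  set 𝓖 := E.law 𝓕 with h𝓖
  have hpow (n : ℕ) : emb (𝓖.ser ^ n) = (↑(𝓖.subT.A ^ (n : ℤ)) : LaurentXY S) := by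
    rw [zpow_natCast, Units.val_pow_eq_pow_val, SubData.A_val, map_pow]
    rfl
  have hs : MvPowerSeries.HasSubst ![𝓖.ser, 𝓖.iy] := 𝓖.subS.hasSubst
  have h1 : mono N 0 1 * A.iterSer E b a c = (↑(𝓖.subT.A ^ l) : LaurentXY S) *
      ((↑(𝓖.subS.B ^ k) : LaurentXY S) * emb (MvPowerSeries.subst ![𝓖.iy, 𝓖.ser] g)) := by
    have h0 := congrArg 𝓖.subS.mon.hom h
    rw [map_mul, map_mul, ← iterSer_skew, map_pow, map_pow, SubData.hom_emb, SubData.hom_mono,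
      SubData.hom_emb, mono_zero_one, one_mul, FormalGroupLaw.subS_A, swap_apply] at h0
    change emb (MvPowerSeries.subst ![𝓖.ser, 𝓖.iy] 𝓖.ser) ^ N * _ =
      _ * emb (MvPowerSeries.subst ![𝓖.ser, 𝓖.iy] _) at h0
    rw [𝓖.subst_ser_iy_ser, emb_X0, mono_one_pow, mul_one, mul_zero,
      subst_pair_subst hasSubst_swap hs, MvPowerSeries.subst_X hs, MvPowerSeries.subst_X hs,
      mul_assoc] at h0
    exact h0
  obtain ⟨N', hN'⟩ := A.exists_sw E b a c
  obtain ⟨p, hp⟩ := Int.eq_ofNat_of_zero_le (a := (N' + l.natAbs : ℕ) + l) (by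
    have := neg_abs_le l
    push_cast
    omega)
  have hser (n : ℕ) : Sw (emb (𝓖.ser ^ n)) (emb (𝓖.ser ^ n)) := by
    have := Sw.emb (𝓖.ser ^ n)
    rwa [map_pow swap, 𝓖.swap_ser] at this
  have hg : Sw (emb (MvPowerSeries.subst ![𝓖.iy, 𝓖.ser] g))
      (emb (MvPowerSeries.subst ![𝓖.ix, 𝓖.ser] g)) := by
    have := Sw.emb (MvPowerSeries.subst ![𝓖.iy, 𝓖.ser] g)
    rwa [swap_subst_pair (hasSubst_pair 𝓖.hasSubst_iy 𝓖.hasSubst_ser'), 𝓖.swap_ser,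
      swap_subst_X1] at this
  have h2 := ((Sw.mono N 0 (1 : S)).mul (hser l.natAbs)).mul hN'
  have h3 := (hser p).mul ((𝓖.sw_iota_zpow k).mul hg)
  have hp' : emb (𝓖.ser ^ p) = emb (𝓖.ser ^ l.natAbs) * emb (𝓖.ser ^ N') *
      (↑(𝓖.subT.A ^ l) : LaurentXY S) := by
    rw [← map_mul, ← pow_add, hpow, hpow, ← Units.val_mul, ← zpow_add, ← hp, add_comm N']
  have h4 : mono N 0 1 * emb (𝓖.ser ^ l.natAbs) * (emb (𝓖.ser ^ N') * A.iterSer E b a c) =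
      emb (𝓖.ser ^ p) *
        ((↑(𝓖.subS.B ^ k) : LaurentXY S) * emb (MvPowerSeries.subst ![𝓖.iy, 𝓖.ser] g)) := by
    rw [hp', mul_assoc _ (Units.val _), ← h1]
    ring
  have h5 := (h4 ▸ h2).unique h3
  have hinv (n : ℕ) : (↑(𝓖.subT.A ^ (-n : ℤ)) : LaurentXY S) * emb (𝓖.ser ^ n) = 1 := by
    rw [hpow, ← Units.val_mul, ← zpow_add, neg_add_cancel, zpow_zero, Units.val_one]
  have hmono : mono 0 (-N : ℤ) (1 : S) * mono 0 N 1 = 1 := by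
    rw [mono_mul, neg_add_cancel, add_zero, mul_one, mono_zero_one]
  calc A.transSer E b a c
    _ = mono 0 (-N : ℤ) (1 : S) * mono 0 N 1 *
        ((↑(𝓖.subT.A ^ (-l.natAbs : ℤ)) : LaurentXY S) * emb (𝓖.ser ^ l.natAbs)) *
        ((↑(𝓖.subT.A ^ (-N' : ℤ)) : LaurentXY S) * emb (𝓖.ser ^ N')) * A.transSer E b a c := by
      rw [hinv, hinv, hmono, one_mul, one_mul, one_mul]
    _ = mono 0 (-N : ℤ) (1 : S) * (↑(𝓖.subT.A ^ (-l.natAbs : ℤ)) : LaurentXY S) *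
        (↑(𝓖.subT.A ^ (-N' : ℤ)) : LaurentXY S) *
        (mono 0 N 1 * emb (𝓖.ser ^ l.natAbs) * (emb (𝓖.ser ^ N') * A.transSer E b a c)) := by ring
    _ = ((↑(𝓖.subT.A ^ (-l.natAbs : ℤ)) : LaurentXY S) * emb (𝓖.ser ^ l.natAbs)) *
        ((↑(𝓖.subT.A ^ (-N' : ℤ)) : LaurentXY S) * emb (𝓖.ser ^ N')) * 𝓖.recR N k l g := by
      rw [h5, hp', FormalGroupLaw.recR]
      ring
    _ = 𝓖.recR N k l g := by rw [hinv, hinv, one_mul, one_mul]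

theorem e_jacobi : E.e (A.bracket a (A.bracket b c)) - E.e (A.bracket (A.bracket a b) c) =
    E.e (A.bracket b (A.bracket a c)) := by
  obtain ⟨N, hN⟩ := A.exists_sw E a b c
  obtain ⟨k, l, g, h1, h2⟩ := exists_eq_mono_mul_emb hN
  have hrec {f h : LaurentXY S} (hf : emb ((E.law 𝓕).ser ^ N) * f = h) :
      f = (↑((E.law 𝓕).subT.A ^ (-N : ℤ)) : LaurentXY S) * h := by
    rw [← hf, map_pow, ← mul_assoc, zpow_neg, zpow_natCast]
    change f = _ * (emb (E.law 𝓕).subT.a ^ N) * f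
    rw [← SubData.A_val, ← Units.val_pow_eq_pow_val, Units.inv_mul, one_mul]
  rw [← A.res2_transSer, ← A.res2_iterSer, ← A.res2_transSer, A.transSer_swap E a b c h2,
    ← FormalGroupLaw.res2_recL_sub_res2_recL, FormalGroupLaw.recL, FormalGroupLaw.recL,
    mul_assoc, mul_assoc, ← hrec h1, ← hrec h2]

/-- The Jacobi identity. -/
theorem jacobi : A.bracket a (A.bracket b c) - A.bracket b (A.bracket a c) =
    A.bracket (A.bracket a b) c := by
  obtain ⟨S, _, ⟨E⟩⟩ := exists_moduleEmbedding R V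
  refine E.e_injective ?_
  rw [map_sub, ← A.e_jacobi E a b c, sub_sub_cancel]

end VertexFAlgebra

end Jacobi

/-- for a vertex `F`-algebra, `[a,b] = Res^F_{z=0} Y(a,z)b dz` descends to a
well-defined `R`-bilinear bracket on `V/∑_{n≥1}𝒮⁽ⁿ⁾(V)` which is skew-symmetric and
satisfies the Jacobi identity, i.e. the quotient becomes a Lie algebra over `R`. -/
theorem vertexF_lie_algebra (R : Type*) [CommRing R] (𝓕 : FormalGroupLaw R)
    (V : Type*) [AddCommGroup V] [Module R V] (A : VertexFAlgebra R 𝓕 V) :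
    let W : Submodule R V := ⨆ n : {n : ℕ // 1 ≤ n}, LinearMap.range (A.S n.1)
    let π : V → V ⧸ W := Submodule.Quotient.mk
    let br : V → V → V := fun a b => 𝓕.resF (A.Y a b)
    (∀ a a' b b' : V, a - a' ∈ W → b - b' ∈ W → π (br a b) = π (br a' b')) ∧
    (∀ (r : R) (a a' b : V), π (br (r • a + a') b) = r • π (br a b) + π (br a' b)) ∧
    (∀ (r : R) (a b b' : V), π (br a (r • b + b')) = r • π (br a b) + π (br a b')) ∧
    (∀ a b : V, π (br a b) = - π (br b a)) ∧
    (∀ a b c : V, π (br a (br b c)) - π (br b (br a c)) = π (br (br a b) c)) := by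
  intro W π br
  have hπ : ∀ n : ℕ, 1 ≤ n → ∀ v, W.mkQ (A.S n v) = 0 := fun n hn v =>
    (Submodule.Quotient.mk_eq_zero W).mpr <|
      le_iSup (fun n : {n : ℕ // 1 ≤ n} => LinearMap.range (A.S n.1)) ⟨n, hn⟩ ⟨v, rfl⟩
  have hW : ∀ w ∈ W, ∀ b, A.bracket w b = 0 := fun w hw b => by
    have : W ≤ LinearMap.ker (A.bracket.flip b) := iSup_le fun n => by
      rintro _ ⟨v, rfl⟩
      exact A.bracket_S n.2 v b
    exact this hw
  have hskew : ∀ a b, W.mkQ (A.bracket a b) = - W.mkQ (A.bracket b a) :=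
    A.map_bracket_skew W.mkQ hπ
  have hleft : ∀ a a' b, a - a' ∈ W → W.mkQ (A.bracket a b) = W.mkQ (A.bracket a' b) := by
    intro a a' b h
    rw [← sub_eq_zero, ← map_sub, ← LinearMap.map_sub₂, hW _ h, map_zero]
  refine ⟨fun a a' b b' ha hb => ?_, fun r a a' b => ?_, fun r a b b' => ?_, hskew,
    fun a b c => ?_⟩
  · change W.mkQ (A.bracket a b) = W.mkQ (A.bracket a' b')
    rw [hleft a a' b ha, hskew, hleft b b' a' hb, ← hskew]
  · change W.mkQ (A.bracket (r • a + a') b) = r • W.mkQ (A.bracket a b) + W.mkQ (A.bracket a' b)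
    rw [map_add, map_smul, LinearMap.add_apply, LinearMap.smul_apply, map_add, map_smul]
  · change W.mkQ (A.bracket a (r • b + b')) = r • W.mkQ (A.bracket a b) + W.mkQ (A.bracket a b')
    rw [map_add, map_smul, map_add, map_smul]
  · change W.mkQ (A.bracket a (A.bracket b c)) - W.mkQ (A.bracket b (A.bracket a c)) =
      W.mkQ (A.bracket (A.bracket a b) c)
    rw [← map_sub, A.jacobi]
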